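/- Large-radius fall-off of the Abbott–Deser charge density: Let s = ±2 and let ψ(r,z) be a smooth complex-valued function on {r > r₊, −1 ≤ z ≤ 1} with 𝒯_s ψ = 0, satisfying ψ(r,z) = Φ₀(z)r^{−1} + O(r^{−2}) (if s = −2), respectively ψ(r,z) = Φ₀(z)r^{−5} + O(r^{−6}) (if s = +2), as r → ∞ uniformly in z, where Φ₀ is smooth on [−1,1], with the corresponding fall-off (one additional inverse power of r per r-derivative) holding for all partial derivatives of ψ up to third order. Set ℱ[k] := Σ·F^{rt}[h^{CCK}[s,ψ], k]. Then for every Killing vector k = x∂_t + y∂_φ, ℱ[k](r,z) = O(r^{−1}) as r → ∞ uniformly in z, and consequently Q[h^{CCK}[s,ψ], k, S_{t,r}] → 0 as r → ∞. -/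

import Mathlib

noncomputable section

open ComplexConjugate Filter

namespace Kerr

/-- A point of the Boyer-Lindquist-type coordinate chart `(t, r, z, φ)`. -/
abbrev Pt := Fin 4 → ℝ

/-- Partial derivative of a real-valued function on the chart. -/
def pd (i : Fin 4) (f : Pt → ℝ) (p : Pt) : ℝ :=
  fderiv ℝ f p (Pi.single i 1)

/-- Partial derivative of a complex-valued function on the chart. -/
def pdC (i : Fin 4) (f : Pt → ℂ) (p : Pt) : ℂ :=
  fderiv ℝ f p (Pi.single i 1)

/-- `Δ := r(r−2M)+a²` for the Kerr black hole with `M = 1`. -/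
def Del (a r : ℝ) : ℝ := r * (r - 2) + a ^ 2

/-- `Σ := r² + a²z²`. -/
def Sig (a r z : ℝ) : ℝ := r ^ 2 + a ^ 2 * z ^ 2

/-- Outer horizon radius `r₊ = 1 + √(1−a²)` (with `M = 1`). -/
def rplus (a : ℝ) : ℝ := 1 + Real.sqrt (1 - a ^ 2)

/-- Inner horizon radius `r₋ = 1 − √(1−a²)` (with `M = 1`). -/
def rminus (a : ℝ) : ℝ := 1 - Real.sqrt (1 - a ^ 2)

/-- The Kerr family of metrics, parametrized by mass `M` and angular momentum `J` (`a = J/M`),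
in Boyer-Lindquist-type coordinates `(t,r,z,φ)`. -/
def gFam (M J : ℝ) (p : Pt) : Matrix (Fin 4) (Fin 4) ℝ :=
  Matrix.of
    ![![-(1 - 2 * M * p 1 / (p 1 ^ 2 + (J / M) ^ 2 * p 2 ^ 2)), 0, 0,
        -(2 * M * (J / M) * p 1 * (1 - p 2 ^ 2) / (p 1 ^ 2 + (J / M) ^ 2 * p 2 ^ 2))],
      ![0, (p 1 ^ 2 + (J / M) ^ 2 * p 2 ^ 2) / (p 1 ^ 2 - 2 * M * p 1 + (J / M) ^ 2), 0, 0],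
      ![0, 0, (p 1 ^ 2 + (J / M) ^ 2 * p 2 ^ 2) / (1 - p 2 ^ 2), 0],
      ![-(2 * M * (J / M) * p 1 * (1 - p 2 ^ 2) / (p 1 ^ 2 + (J / M) ^ 2 * p 2 ^ 2)), 0, 0,
        (1 - p 2 ^ 2) / (p 1 ^ 2 + (J / M) ^ 2 * p 2 ^ 2) *
          (2 * (J / M) ^ 2 * M * p 1 * (1 - p 2 ^ 2)
            + ((J / M) ^ 2 + p 1 ^ 2) * (p 1 ^ 2 + (J / M) ^ 2 * p 2 ^ 2))]]

/-- The background Kerr metric with `M = 1` and spin `a`. -/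
def g (a : ℝ) : Pt → Matrix (Fin 4) (Fin 4) ℝ := gFam 1 a

/-- Inverse Kerr metric. -/
def gInv (a : ℝ) (p : Pt) : Matrix (Fin 4) (Fin 4) ℝ := (g a p)⁻¹

/-- Christoffel symbols `Γ^l_{m n}` of the Kerr metric. -/
def Chr (a : ℝ) (l m n : Fin 4) (p : Pt) : ℝ :=
  (1 / 2) * ∑ s : Fin 4, gInv a p l s *
    (pd m (fun q => g a q s n) p + pd n (fun q => g a q s m) p - pd s (fun q => g a q m n) p)

/-- Covariant derivative `(∇_c h)_{α β}` of a covariant 2-tensor field. -/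
def covD2 (a : ℝ) (h : Pt → Matrix (Fin 4) (Fin 4) ℝ) (c α β : Fin 4) (p : Pt) : ℝ :=
  pd c (fun q => h q α β) p
    - ∑ s : Fin 4, Chr a s c α p * h p s β
    - ∑ s : Fin 4, Chr a s c β p * h p α s

/-- Covariant derivative `(∇_c T)_{α β γ}` of a covariant 3-tensor field. -/
def covD3 (a : ℝ) (T : Fin 4 → Fin 4 → Fin 4 → Pt → ℝ) (c α β γ : Fin 4) (p : Pt) : ℝ :=
  pd c (fun q => T α β γ q) p
    - ∑ s : Fin 4, Chr a s c α p * T s β γ p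
    - ∑ s : Fin 4, Chr a s c β p * T α s γ p
    - ∑ s : Fin 4, Chr a s c γ p * T α β s p

/-- The Killing vector `k = x ∂_t + y ∂_φ` of the Kerr background. -/
def kvec (x y : ℝ) : Fin 4 → ℝ := ![x, 0, 0, y]

/-- The lowered Killing covector `k_α`. -/
def kco (a x y : ℝ) (p : Pt) (α : Fin 4) : ℝ := ∑ s : Fin 4, g a p α s * kvec x y s

/-- `∇_β k^λ` for the Killing vector `k = x ∂_t + y ∂_φ`. -/
def covDk (a x y : ℝ) (β l : Fin 4) (p : Pt) : ℝ :=
  pd β (fun _ => kvec x y l) p + ∑ s : Fin 4, Chr a l β s p * kvec x y s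

/-- Trace-reversed metric perturbation `h̄_{αβ} = h_{αβ} − ½ g_{αβ} g^{λσ} h_{λσ}`. -/
def trRev (a : ℝ) (h : Pt → Matrix (Fin 4) (Fin 4) ℝ) (p : Pt) : Matrix (Fin 4) (Fin 4) ℝ :=
  Matrix.of fun α β =>
    h p α β - (1 / 2) * g a p α β * ∑ l : Fin 4, ∑ s : Fin 4, gInv a p l s * h p l s

/-- Abbott–Deser 2-form `F_{αβ}[h, k]` (lowered indices) for the Killing vector
`k = x ∂_t + y ∂_φ`. -/
def ADform (a : ℝ) (h : Pt → Matrix (Fin 4) (Fin 4) ℝ) (x y : ℝ) (α β : Fin 4) (p : Pt) : ℝ :=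
  (1 / (8 * Real.pi)) *
    ((1 / 2) * (∑ l : Fin 4, kvec x y l *
        (covD2 a (trRev a h) α β l p - covD2 a (trRev a h) β α l p))
    + (1 / 2) * (∑ l : Fin 4,
        (trRev a h p l α * covDk a x y β l p - trRev a h p l β * covDk a x y α l p))
    - (1 / 2) *
        (kco a x y p α * ∑ l : Fin 4, ∑ s : Fin 4, gInv a p l s * covD2 a (trRev a h) s β l p
        - kco a x y p β * ∑ l : Fin 4, ∑ s : Fin 4, gInv a p l s * covD2 a (trRev a h) s α l p))

/-- Abbott–Deser 2-form with raised indices, `F^{αβ}[h,k]`. -/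
def ADformUp (a : ℝ) (h : Pt → Matrix (Fin 4) (Fin 4) ℝ) (x y : ℝ) (α β : Fin 4) (p : Pt) : ℝ :=
  ∑ m : Fin 4, ∑ n : Fin 4, gInv a p α m * gInv a p β n * ADform a h x y m n p

/-- The Abbott–Deser charge density `ℱ[k] := Σ F^{rt}[h,k]`. -/
def Fdens (a : ℝ) (h : Pt → Matrix (Fin 4) (Fin 4) ℝ) (x y : ℝ) (p : Pt) : ℝ :=
  Sig a (p 1) (p 2) * ADformUp a h x y 1 0 p

/-- The Abbott–Deser charge `Q[h, x∂_t + y∂_φ, S_{t,r}] = ∫₀^{2π}∫_{−1}^1 Σ F^{rt} dz dφ`. -/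
def ADcharge (a : ℝ) (h : Pt → Matrix (Fin 4) (Fin 4) ℝ) (x y t r : ℝ) : ℝ :=
  ∫ φ in (0:ℝ)..(2 * Real.pi), ∫ z in (-1:ℝ)..(1:ℝ),
    Sig a r z * ADformUp a h x y 1 0 ![t, r, z, φ]

/-! ### The Kinnersley tetrad and Newman-Penrose quantities -/

/-- The Newman–Penrose coefficient `ρ = −1/(r − i a z)`. -/
def rhoC (a : ℝ) (p : Pt) : ℂ := -1 / ((p 1 : ℂ) - Complex.I * (a : ℂ) * (p 2 : ℂ))

/-- Kinnersley tetrad leg `l^μ`. -/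
def lvec (a : ℝ) (p : Pt) : Fin 4 → ℂ := fun i =>
  ((![(p 1 ^ 2 + a ^ 2) / Del a (p 1), 1, 0, a / Del a (p 1)] : Fin 4 → ℝ) i : ℂ)

/-- Kinnersley tetrad leg `n^μ`. -/
def nvec (a : ℝ) (p : Pt) : Fin 4 → ℂ := fun i =>
  ((![(p 1 ^ 2 + a ^ 2) / (2 * Sig a (p 1) (p 2)), -Del a (p 1) / (2 * Sig a (p 1) (p 2)), 0,
      a / (2 * Sig a (p 1) (p 2))] : Fin 4 → ℝ) i : ℂ)

/-- Kinnersley tetrad leg `m^μ`. -/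
def mvec (a : ℝ) (p : Pt) : Fin 4 → ℂ := fun i =>
  (-(conj (rhoC a p)) * (Real.sqrt (1 - p 2 ^ 2) : ℂ) / (Real.sqrt 2 : ℂ)) *
    (![Complex.I * (a : ℂ), 0, -1, Complex.I / (1 - (p 2 : ℂ) ^ 2)] i)

/-- Kinnersley tetrad leg `m̄^μ`. -/
def mbvec (a : ℝ) (p : Pt) : Fin 4 → ℂ := fun i => conj (mvec a p i)

/-- Lowered tetrad covector `l_μ`. -/
def lco (a : ℝ) (p : Pt) (i : Fin 4) : ℂ := ∑ j : Fin 4, (g a p i j : ℂ) * lvec a p j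

/-- Lowered tetrad covector `n_μ`. -/
def nco (a : ℝ) (p : Pt) (i : Fin 4) : ℂ := ∑ j : Fin 4, (g a p i j : ℂ) * nvec a p j

/-- Lowered tetrad covector `m_μ`. -/
def mco (a : ℝ) (p : Pt) (i : Fin 4) : ℂ := ∑ j : Fin 4, (g a p i j : ℂ) * mvec a p j

/-- Lowered tetrad covector `m̄_μ`. -/
def mbco (a : ℝ) (p : Pt) (i : Fin 4) : ℂ := ∑ j : Fin 4, (g a p i j : ℂ) * mbvec a p j

/-- Newman–Penrose spin coefficient `μ = ρ²ρ̄Δ/2`. -/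
def muNP (a : ℝ) (p : Pt) : ℂ := rhoC a p ^ 2 * conj (rhoC a p) * (Del a (p 1) : ℂ) / 2

/-- Newman–Penrose spin coefficient `τ = −iaρρ̄√(1−z²)/√2`. -/
def tauNP (a : ℝ) (p : Pt) : ℂ :=
  -Complex.I * (a : ℂ) * rhoC a p * conj (rhoC a p) * (Real.sqrt (1 - p 2 ^ 2) : ℂ)
    / (Real.sqrt 2 : ℂ)

/-- Newman–Penrose spin coefficient `π = iaρ²√(1−z²)/√2`. -/
def piNP (a : ℝ) (p : Pt) : ℂ :=
  Complex.I * (a : ℂ) * rhoC a p ^ 2 * (Real.sqrt (1 - p 2 ^ 2) : ℂ) / (Real.sqrt 2 : ℂ)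

/-- Newman–Penrose spin coefficient `γ = μ + ρρ̄(r−1)/2`. -/
def gamNP (a : ℝ) (p : Pt) : ℂ :=
  muNP a p + rhoC a p * conj (rhoC a p) * ((p 1 : ℂ) - 1) / 2

/-- Newman–Penrose spin coefficient `β = −ρ̄z/(2√2√(1−z²))`. -/
def betNP (a : ℝ) (p : Pt) : ℂ :=
  -(conj (rhoC a p)) * (p 2 : ℂ) / (2 * (Real.sqrt 2 : ℂ) * (Real.sqrt (1 - p 2 ^ 2) : ℂ))

/-- Newman–Penrose spin coefficient `α = π − β̄`. -/
def alpNP (a : ℝ) (p : Pt) : ℂ := piNP a p - conj (betNP a p)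

/-- Directional derivative along a (complex) vector field. -/
def dirD (v : Pt → Fin 4 → ℂ) (f : Pt → ℂ) (p : Pt) : ℂ := ∑ i : Fin 4, v p i * pdC i f p

/-- First-order operator `(v^μ ∂_μ + c)` acting on complex scalars. -/
def opD (v : Pt → Fin 4 → ℂ) (c : Pt → ℂ) (f : Pt → ℂ) : Pt → ℂ :=
  fun p => dirD v f p + c p * f p

/-- The CCK operator `₊₂Ĥ_{μν}` applied to a Hertz potential `Φ`. -/
def Hplus (a : ℝ) (Φ : Pt → ℂ) (p : Pt) (i j : Fin 4) : ℂ :=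
  -(rhoC a p) ^ (-4 : ℤ) *
    (lco a p i * lco a p j *
        opD (mbvec a) (fun q => -3 * alpNP a q - conj (betNP a q) + 5 * piNP a q)
          (opD (mbvec a) (fun q => -4 * alpNP a q + piNP a q) Φ) p
    + mco a p i * mco a p j *
        opD (nvec a) (fun q => 5 * muNP a q - 3 * gamNP a q + conj (gamNP a q))
          (opD (nvec a) (fun q => muNP a q - 4 * gamNP a q) Φ) p
    - (1 / 2) * (lco a p i * mco a p j + lco a p j * mco a p i) *
        (opD (mbvec a)
            (fun q => -3 * alpNP a q + conj (betNP a q) + 5 * piNP a q + conj (tauNP a q))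
            (opD (nvec a) (fun q => muNP a q - 4 * gamNP a q) Φ) p
        + opD (nvec a)
            (fun q => 5 * muNP a q - conj (muNP a q) - 3 * gamNP a q - conj (gamNP a q))
            (opD (mbvec a) (fun q => -4 * alpNP a q + piNP a q) Φ) p))

/-- The CCK operator `₋₂Ĥ_{μν}` applied to a Hertz potential `Φ`. -/
def Hminus (a : ℝ) (Φ : Pt → ℂ) (p : Pt) (i j : Fin 4) : ℂ :=
  -(nco a p i * nco a p j *
        opD (mvec a) (fun q => conj (alpNP a q) + 3 * betNP a q - tauNP a q)
          (opD (mvec a) (fun q => 4 * betNP a q + 3 * tauNP a q) Φ) p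
    + mbco a p i * mbco a p j *
        opD (lvec a) (fun q => -(rhoC a q))
          (opD (lvec a) (fun q => 3 * rhoC a q) Φ) p
    - (1 / 2) * (nco a p i * mbco a p j + nco a p j * mbco a p i) *
        (opD (mvec a) (fun q => -2 * conj (alpNP a q) + 2 * betNP a q - tauNP a q)
            (opD (lvec a) (fun q => 3 * rhoC a q) Φ) p
        + opD (lvec a) (fun q => conj (rhoC a q) - rhoC a q)
            (opD (mvec a) (fun q => 4 * betNP a q + 3 * tauNP a q) Φ) p))

/-- `ₛĤ_{μν} Φ` for `s = ±2`. -/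
def Hop (a : ℝ) (s : ℤ) (Φ : Pt → ℂ) (p : Pt) (i j : Fin 4) : ℂ :=
  if s = 2 then Hplus a Φ p i j else Hminus a Φ p i j

/-- The CCK metric perturbation `h^{CCK}[s,Φ]_{μν} := ₛĤ_{μν}Φ + c.c.`. -/
def hCCK (a : ℝ) (s : ℤ) (Φ : Pt → ℂ) (p : Pt) : Matrix (Fin 4) (Fin 4) ℝ :=
  Matrix.of fun i j => (Hop a s Φ p i j + conj (Hop a s Φ p i j)).re

/-- The homogeneous spin-`s` Teukolsky operator on the Kerr exterior. -/
def Teuk (a : ℝ) (s : ℤ) (Φ : Pt → ℂ) (p : Pt) : ℂ :=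
  -((((p 1 : ℂ) ^ 2 + (a : ℂ) ^ 2) ^ 2 / (Del a (p 1) : ℂ)
      - (a : ℂ) ^ 2 * (1 - (p 2 : ℂ) ^ 2)) * pdC 0 (pdC 0 Φ) p)
  - (4 * (a : ℂ) * (p 1 : ℂ) / (Del a (p 1) : ℂ)) * pdC 0 (pdC 3 Φ) p
  - ((a : ℂ) ^ 2 / (Del a (p 1) : ℂ) - 1 / (1 - (p 2 : ℂ) ^ 2)) * pdC 3 (pdC 3 Φ) p
  + 2 * (s : ℂ) * (((p 1 : ℂ) ^ 2 - (a : ℂ) ^ 2) / (Del a (p 1) : ℂ) - (p 1 : ℂ)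
      - Complex.I * (a : ℂ) * (p 2 : ℂ)) * pdC 0 Φ p
  + 2 * (s : ℂ) * ((a : ℂ) * ((p 1 : ℂ) - 1) / (Del a (p 1) : ℂ)
      + Complex.I * (p 2 : ℂ) / (1 - (p 2 : ℂ) ^ 2)) * pdC 3 Φ p
  + (Del a (p 1) : ℂ) ^ (-s) *
      pdC 1 (fun q => (Del a (q 1) : ℂ) ^ (s + 1) * pdC 1 Φ q) p
  + pdC 2 (fun q => (1 - (q 2 : ℂ) ^ 2) * pdC 2 Φ q) p
  - (((s : ℂ) * ((s : ℂ) + 1) * (p 2 : ℂ) ^ 2 - (s : ℂ)) / (1 - (p 2 : ℂ) ^ 2)) * Φ p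

/-- The exterior Kerr coordinate patch `{r > r₊, −1 < z < 1}`. -/
def ext (a : ℝ) : Set Pt := {p | rplus a < p 1 ∧ -1 < p 2 ∧ p 2 < 1}

/-- The closed exterior patch `{r > r₊, −1 ≤ z ≤ 1}`. -/
def extCl (a : ℝ) : Set Pt := {p | rplus a < p 1 ∧ -1 ≤ p 2 ∧ p 2 ≤ 1}

/-- A Fourier mode Hertz potential `Φ(t,r,z,φ) = ψ(r,z) e^{i(mφ − ωt)}`. -/
def fourierMode (m : ℤ) (ω : ℝ) (ψ : ℝ → ℝ → ℂ) : Pt → ℂ :=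
  fun p => ψ (p 1) (p 2) * Complex.exp (Complex.I * ((m : ℂ) * (p 3 : ℂ) - (ω : ℂ) * (p 0 : ℂ)))

/-- The 2D domain `U = {(r,z) : r > r₊, −1 < z < 1}`. -/
def U2 (a : ℝ) : Set (ℝ × ℝ) := {q | rplus a < q.1 ∧ -1 < q.2 ∧ q.2 < 1}

/-- The closed 2D domain `{(r,z) : r > r₊, −1 ≤ z ≤ 1}`. -/
def U2cl (a : ℝ) : Set (ℝ × ℝ) := {q | rplus a < q.1 ∧ -1 ≤ q.2 ∧ q.2 ≤ 1}

/-- `∂_r` of a function of `(r, z)`. -/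
def pdr2 (f : ℝ → ℝ → ℂ) : ℝ → ℝ → ℂ := fun r z => deriv (fun r' => f r' z) r

/-- `∂_z` of a function of `(r, z)`. -/
def pdz2 (f : ℝ → ℝ → ℂ) : ℝ → ℝ → ℂ := fun r z => deriv (fun z' => f r z') z

/-- The stationary axisymmetric spin-`s` Teukolsky operator
`𝒯_s Φ := Δ^{−s}∂_r(Δ^{s+1}∂_rΦ) + ∂_z((1−z²)∂_zΦ) − ((s(s+1)z²−s)/(1−z²))Φ`. -/
def TeukSAS (a : ℝ) (s : ℤ) (ψ : ℝ → ℝ → ℂ) (r z : ℝ) : ℂ :=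
  (Del a r : ℂ) ^ (-s) *
      deriv (fun r' => (Del a r' : ℂ) ^ (s + 1) * deriv (fun r'' => ψ r'' z) r') r
    + deriv (fun z' => ((1 - z' ^ 2 : ℝ) : ℂ) * deriv (fun z'' => ψ r z'') z') z
    - (((s : ℂ) * ((s : ℂ) + 1) * (z : ℂ) ^ 2 - (s : ℂ)) / (1 - (z : ℂ) ^ 2)) * ψ r z


/-- The mass perturbation `h_M := ∂g^{Kerr}/∂M` at `M = 1`, `J = a`. -/
def hM (a : ℝ) (p : Pt) : Matrix (Fin 4) (Fin 4) ℝ :=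
  Matrix.of fun i j => deriv (fun M => gFam M a p i j) 1

/-- The angular-momentum perturbation `h_J := ∂g^{Kerr}/∂J` at `M = 1`, `J = a`. -/
def hJ (a : ℝ) (p : Pt) : Matrix (Fin 4) (Fin 4) ℝ :=
  Matrix.of fun i j => deriv (fun J => gFam 1 J p i j) a

/-- The eight-parameter family `Φ_Ker(c)` of stationary axisymmetric kernel elements
(`c 0, ..., c 7` correspond to `c₁, ..., c₈`). -/
def PhiKer (a : ℝ) (c : Fin 8 → ℂ) (r z : ℝ) : ℂ :=
  (1 - (z : ℂ) ^ 2)⁻¹ *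
    (c 0
    + c 1 * ((r : ℂ) - 1) * (z : ℂ)
    + c 2 * (z : ℂ) * ((z : ℂ) ^ 2 - 3)
    + c 3 * ((r : ℂ) + ((r : ℂ) - 1) * (z : ℂ) ^ 2)
    + c 4 * ((r : ℂ) ^ 2 - (a : ℂ) ^ 2) * (z : ℂ)
    + c 5 * (r : ℂ) * ((r : ℂ) * ((r : ℂ) - 3) + 3 * (a : ℂ) ^ 2)
    + c 6 * ((r : ℂ) ^ 2 + ((r : ℂ) ^ 2 - (a : ℂ) ^ 2) * (z : ℂ) ^ 2)
    + c 7 * (r : ℂ) * (z : ℂ) *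
        (((r : ℂ) * ((r : ℂ) - 3) + 3 * (a : ℂ) ^ 2) * (z : ℂ) ^ 2
          - 3 * ((r : ℂ) * ((r : ℂ) + 4) - 4 * (a : ℂ) ^ 2)))

/-- `G(z) = −4(1−a²)r₊z(1−z²)/(2z² + r₊(1−z²))²`. -/
def Gfun (a z : ℝ) : ℝ :=
  -4 * (1 - a ^ 2) * rplus a * z * (1 - z ^ 2) / (2 * z ^ 2 + rplus a * (1 - z ^ 2)) ^ 2

/-- Outward Abbott–Deser flux through the closed surface `C_ε⁺` around the segment
`r₁ ≤ r ≤ r₂` of the axis `z = 1`, in the slice `t = t₀`: two caps at `r = r₁, r₂`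
and the tube at `z = 1 − ε`. -/
def axisFluxP (a : ℝ) (h : Pt → Matrix (Fin 4) (Fin 4) ℝ) (x y t r₁ r₂ ε : ℝ) : ℝ :=
  (∫ φ in (0:ℝ)..(2 * Real.pi), ∫ z in (1 - ε)..(1:ℝ),
      Sig a r₂ z * ADformUp a h x y 1 0 ![t, r₂, z, φ])
  - (∫ φ in (0:ℝ)..(2 * Real.pi), ∫ z in (1 - ε)..(1:ℝ),
      Sig a r₁ z * ADformUp a h x y 1 0 ![t, r₁, z, φ])
  - (∫ φ in (0:ℝ)..(2 * Real.pi), ∫ r in r₁..r₂,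
      Sig a r (1 - ε) * ADformUp a h x y 2 0 ![t, r, 1 - ε, φ])

/-- Outward Abbott–Deser flux through the closed surface `C_ε⁻` around the segment
`r₁ ≤ r ≤ r₂` of the axis `z = −1`. -/
def axisFluxM (a : ℝ) (h : Pt → Matrix (Fin 4) (Fin 4) ℝ) (x y t r₁ r₂ ε : ℝ) : ℝ :=
  (∫ φ in (0:ℝ)..(2 * Real.pi), ∫ z in (-1:ℝ)..(-1 + ε),
      Sig a r₂ z * ADformUp a h x y 1 0 ![t, r₂, z, φ])
  - (∫ φ in (0:ℝ)..(2 * Real.pi), ∫ z in (-1:ℝ)..(-1 + ε),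
      Sig a r₁ z * ADformUp a h x y 1 0 ![t, r₁, z, φ])
  + (∫ φ in (0:ℝ)..(2 * Real.pi), ∫ r in r₁..r₂,
      Sig a r (-1 + ε) * ADformUp a h x y 2 0 ![t, r, -1 + ε, φ])

/-- The statement that both limiting Abbott–Deser axis charges
`Q_axis^± [h, x∂_t + y∂_φ, r₁, r₂]` vanish. -/
def axisChargesVanish (a : ℝ) (h : Pt → Matrix (Fin 4) (Fin 4) ℝ) : Prop :=
  ∀ x y t r₁ r₂ : ℝ, rplus a < r₁ → r₁ < r₂ →
    Tendsto (fun ε => axisFluxP a h x y t r₁ r₂ ε) (nhdsWithin 0 (Set.Ioi 0)) (nhds 0) ∧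
    Tendsto (fun ε => axisFluxM a h x y t r₁ r₂ ε) (nhdsWithin 0 (Set.Ioi 0)) (nhds 0)

/-- Covariant Hessian `∇_α ∇_β f` of a scalar field. -/
def hess (a : ℝ) (f : Pt → ℝ) (α β : Fin 4) (p : Pt) : ℝ :=
  pd α (fun q => pd β f q) p - ∑ s : Fin 4, Chr a s α β p * pd s f p

/-- The linearized Ricci tensor
`δR_{αβ}[h] = −½∇^λ∇_λ h_{αβ} − ½∇_α∇_β(g^{λσ}h_{λσ}) + ∇^λ∇_{(α}h_{β)λ}`. -/
def linRicci (a : ℝ) (h : Pt → Matrix (Fin 4) (Fin 4) ℝ) (α β : Fin 4) (p : Pt) : ℝ :=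
  -(1 / 2) * (∑ l : Fin 4, ∑ s : Fin 4, gInv a p l s * covD3 a (covD2 a h) l s α β p)
  - (1 / 2) * hess a (fun q => ∑ l : Fin 4, ∑ s : Fin 4, gInv a q l s * h q l s) α β p
  + (1 / 2) * ((∑ l : Fin 4, ∑ s : Fin 4, gInv a p l s * covD3 a (covD2 a h) s α β l p)
      + (∑ l : Fin 4, ∑ s : Fin 4, gInv a p l s * covD3 a (covD2 a h) s β α l p))


/-! ### A weighted symbol calculus -/

/-- The large-radius region. -/
def Om (R : ℝ) : Set Pt := {P | R < P 1 ∧ -1 < P 2 ∧ P 2 < 1}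

/-- `w = √(1 - z²)`. -/
def ww (P : Pt) : ℝ := Real.sqrt (1 - P 2 ^ 2)

lemma isOpen_Om (R : ℝ) : IsOpen (Om R) := by
  have h1 : IsOpen {P : Pt | R < P 1} := isOpen_lt continuous_const (continuous_apply 1)
  have h2 : IsOpen {P : Pt | -1 < P 2} := isOpen_lt continuous_const (continuous_apply 2)
  have h3 : IsOpen {P : Pt | P 2 < 1} := isOpen_lt (continuous_apply 2) continuous_const
  exact h1.inter (h2.inter h3)

lemma one_sub_sq_pos {R : ℝ} {P : Pt} (hP : P ∈ Om R) : 0 < 1 - P 2 ^ 2 := by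
  have h := hP.2; nlinarith [h.1, h.2]

lemma ww_pos {R : ℝ} {P : Pt} (hP : P ∈ Om R) : 0 < ww P :=
  Real.sqrt_pos.2 (one_sub_sq_pos hP)

lemma ww_le_one (P : Pt) : ww P ≤ 1 := by
  unfold ww
  rw [show (1:ℝ) = Real.sqrt 1 by simp]
  apply Real.sqrt_le_sqrt
  rw [Real.sqrt_one]
  nlinarith [sq_nonneg (P 2)]

lemma ww_sq {R : ℝ} {P : Pt} (hP : P ∈ Om R) : ww P ^ 2 = 1 - P 2 ^ 2 :=
  Real.sq_sqrt (one_sub_sq_pos hP).le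

lemma r_gt {R : ℝ} [hR : Fact (4 ≤ R)] {P : Pt} (hP : P ∈ Om R) : 4 < P 1 :=
  lt_of_le_of_lt hR.out hP.1

lemma absz {R : ℝ} {P : Pt} (hP : P ∈ Om R) : |P 2| ≤ 1 :=
  abs_le.2 ⟨hP.2.1.le, hP.2.2.le⟩

section calculus

set_option linter.unusedSectionVars false

variable {E : Type*} [NormedField E] [NormedAlgebra ℝ E]
variable {F : Type*} [NormedField F] [NormedAlgebra ℝ F]

/-- Partial derivatives (common generalization of `pd` and `pdC`). -/
def dd (i : Fin 4) (f : Pt → E) (P : Pt) : E := fderiv ℝ f P (Pi.single i 1)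

/-- `f = O(r^p w^q)` on the region. -/
def Bd (R : ℝ) (p q : ℤ) (f : Pt → E) : Prop :=
  ∃ C : ℝ, 0 ≤ C ∧ ∀ P ∈ Om R, ‖f P‖ ≤ C * (P 1 ^ p * ww P ^ q)

/-- Symbols up to order `k`: each `∂_r` gains a power of `r` and shifts the `w`-weight sequence,
each `∂_z` costs `w^c`. -/
def MM (R : ℝ) (c : ℕ) : ℕ → ℤ → (ℕ → ℤ) → (Pt → E) → Prop
  | 0, p, q, f => Bd R p (q 0) f
  | k + 1, p, q, f => Bd R p (q 0) f ∧
      (∀ P ∈ Om R, DifferentiableAt ℝ f P ∧ dd 0 f P = 0 ∧ dd 3 f P = 0) ∧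
      MM R c k (p - 1) (fun i => q (i + 1)) (dd 1 f) ∧
      MM R c k p (fun i => q i - c) (dd 2 f)

variable {R : ℝ} {c k : ℕ} {p p' : ℤ} {q q' : ℕ → ℤ} {e e' : ℤ} {f g : Pt → E}

lemma wt_pos [Fact (4 ≤ R)] {P : Pt} (hP : P ∈ Om R) (p q : ℤ) : 0 < P 1 ^ p * ww P ^ q := by
  have h1 := r_gt hP
  have h2 := ww_pos hP
  have : 0 < P 1 := by linarith
  positivity

lemma wt_mono [Fact (4 ≤ R)] {P : Pt} (hP : P ∈ Om R) {p q p' q' : ℤ} (hp : p ≤ p') (hq : q' ≤ q) :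
    P 1 ^ p * ww P ^ q ≤ P 1 ^ p' * ww P ^ q' := by
  have h1 := r_gt hP
  have h2 := ww_pos hP
  have h3 : 0 < P 1 := by linarith
  apply mul_le_mul (zpow_le_zpow_right₀ (by linarith) hp) _ (by positivity) (by positivity)
  · exact zpow_le_zpow_right_of_le_one₀ h2 (ww_le_one P) hq

lemma Bd.mono [Fact (4 ≤ R)] (h : Bd R p e f) (hp : p ≤ p') (he : e' ≤ e) : Bd R p' e' f := by
  obtain ⟨C, hC, h⟩ := h
  exact ⟨C, hC, fun P hP => (h P hP).trans (mul_le_mul_of_nonneg_left (wt_mono hP hp he) hC)⟩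

lemma Bd.congr (h : Bd R p e f) (hfg : ∀ P ∈ Om R, g P = f P) : Bd R p e g := by
  obtain ⟨C, hC, h⟩ := h
  exact ⟨C, hC, fun P hP => (hfg P hP) ▸ h P hP⟩

lemma Bd.zero [Fact (4 ≤ R)] : Bd R p e (fun _ => (0 : E)) :=
  ⟨0, le_rfl, fun P _ => by simp⟩

lemma Bd.add [Fact (4 ≤ R)] (hf : Bd R p e f) (hg : Bd R p e g) : Bd R p e (fun P => f P + g P) := by
  obtain ⟨C, hC, h⟩ := hf
  obtain ⟨C', hC', h'⟩ := hg
  refine ⟨C + C', by positivity, fun P hP => (norm_add_le _ _).trans ?_⟩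
  rw [add_mul]
  exact add_le_add (h P hP) (h' P hP)

lemma Bd.neg (hf : Bd R p e f) : Bd R p e (fun P => - f P) := by
  obtain ⟨C, hC, h⟩ := hf
  exact ⟨C, hC, fun P hP => by rw [norm_neg]; exact h P hP⟩

lemma Bd.sub [Fact (4 ≤ R)] (hf : Bd R p e f) (hg : Bd R p e g) :
    Bd R p e (fun P => f P - g P) := by
  simpa only [sub_eq_add_neg] using hf.add hg.neg

lemma Bd.mul [Fact (4 ≤ R)] (hf : Bd R p e f) (hg : Bd R p' e' g) :
    Bd R (p + p') (e + e') (fun P => f P * g P) := by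
  obtain ⟨C, hC, h⟩ := hf
  obtain ⟨C', hC', h'⟩ := hg
  refine ⟨C * C', by positivity, fun P hP => ?_⟩
  have h1 := r_gt hP
  have h2 := ww_pos hP
  have h3 : 0 < P 1 := by linarith
  rw [norm_mul, zpow_add₀ h3.ne', zpow_add₀ h2.ne']
  calc ‖f P‖ * ‖g P‖ ≤ (C * (P 1 ^ p * ww P ^ e)) * (C' * (P 1 ^ p' * ww P ^ e')) :=
        mul_le_mul (h P hP) (h' P hP) (norm_nonneg _) (mul_nonneg hC (wt_pos hP _ _).le)
    _ = _ := by ring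

lemma Bd.cmul (a : E) (hf : Bd R p e f) : Bd R p e (fun P => a * f P) := by
  obtain ⟨C, hC, h⟩ := hf
  refine ⟨‖a‖ * C, by positivity, fun P hP => ?_⟩
  rw [norm_mul, mul_assoc]
  exact mul_le_mul_of_nonneg_left (h P hP) (norm_nonneg _)

lemma Bd.clm (L : E →L[ℝ] F) (hf : Bd R p e f) : Bd R p e (fun P => L (f P)) := by
  obtain ⟨C, hC, h⟩ := hf
  refine ⟨‖L‖ * C, by positivity, fun P hP => ?_⟩
  rw [mul_assoc]
  exact (L.le_opNorm _).trans (mul_le_mul_of_nonneg_left (h P hP) (norm_nonneg _))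

lemma MM.bd (h : MM R c k p q f) : Bd R p (q 0) f := by
  cases k with
  | zero => exact h
  | succ k => exact h.1

lemma dd_congr (h : ∀ P ∈ Om R, g P = f P) {P : Pt} (hP : P ∈ Om R) (i : Fin 4) :
    dd i g P = dd i f P := by
  have : g =ᶠ[nhds P] f := by
    filter_upwards [(isOpen_Om R).mem_nhds hP] with Q hQ using h Q hQ
  simp only [dd, this.fderiv_eq]

lemma diff_congr (h : ∀ P ∈ Om R, g P = f P) {P : Pt} (hP : P ∈ Om R)
    (hf : DifferentiableAt ℝ f P) : DifferentiableAt ℝ g P := by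
  have : g =ᶠ[nhds P] f := by
    filter_upwards [(isOpen_Om R).mem_nhds hP] with Q hQ using h Q hQ
  exact this.differentiableAt_iff.2 hf

lemma MM.congr (h : MM R c k p q f) (hfg : ∀ P ∈ Om R, g P = f P) : MM R c k p q g := by
  induction k generalizing p q f g with
  | zero => exact Bd.congr h hfg
  | succ k ih =>
    obtain ⟨h0, h1, h2, h3⟩ := h
    refine ⟨h0.congr hfg, fun P hP => ?_, ih h2 fun P hP => dd_congr hfg hP 1,
      ih h3 fun P hP => dd_congr hfg hP 2⟩
    rw [dd_congr hfg hP, dd_congr hfg hP]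
    exact ⟨diff_congr hfg hP (h1 P hP).1, (h1 P hP).2⟩

lemma MM.mono [Fact (4 ≤ R)] (h : MM R c k p q f) (hp : p ≤ p') (hq : ∀ i ≤ k, q' i ≤ q i) :
    MM R c k p' q' f := by
  induction k generalizing p p' q q' f with
  | zero => exact Bd.mono h hp (hq 0 le_rfl)
  | succ k ih =>
    obtain ⟨h0, h1, h2, h3⟩ := h
    refine ⟨h0.mono hp (hq 0 (by omega)), h1, ih h2 (by omega) fun i hi => hq _ (by omega),
      ih h3 hp fun i hi => ?_⟩
    have := hq i (by omega)
    omega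

lemma MM.down (h : MM R c (k + 1) p q f) : MM R c k p q f := by
  induction k generalizing p q f with
  | zero => exact h.1
  | succ k ih =>
    obtain ⟨h0, h1, h2, h3⟩ := h
    exact ⟨h0, h1, ih h2, ih h3⟩

lemma MM.add [Fact (4 ≤ R)] (hf : MM R c k p q f) (hg : MM R c k p q g) :
    MM R c k p q (fun P => f P + g P) := by
  induction k generalizing p q f g with
  | zero => exact Bd.add hf hg
  | succ k ih =>
    obtain ⟨h0, h1, h2, h3⟩ := hf
    obtain ⟨h0', h1', h2', h3'⟩ := hg
    have key : ∀ i, ∀ P ∈ Om R, dd i (fun P => f P + g P) P = dd i f P + dd i g P := by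
      intro i P hP
      simp only [dd]
      rw [fderiv_fun_add (h1 P hP).1 (h1' P hP).1]; rfl
    refine ⟨h0.add h0', fun P hP => ⟨(h1 P hP).1.add (h1' P hP).1, ?_, ?_⟩,
      (ih h2 h2').congr (key 1), (ih h3 h3').congr (key 2)⟩
    · rw [key 0 P hP, (h1 P hP).2.1, (h1' P hP).2.1, add_zero]
    · rw [key 3 P hP, (h1 P hP).2.2, (h1' P hP).2.2, add_zero]

lemma MM.clm [Fact (4 ≤ R)] (L : E →L[ℝ] F) (hf : MM R c k p q f) :
    MM R c k p q (fun P => L (f P)) := by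
  induction k generalizing p q f with
  | zero => exact Bd.clm L hf
  | succ k ih =>
    obtain ⟨h0, h1, h2, h3⟩ := hf
    have key : ∀ i, ∀ P ∈ Om R, dd i (fun P => L (f P)) P = L (dd i f P) := by
      intro i P hP
      simp only [dd]
      rw [show (fun P => L (f P)) = L ∘ f from rfl,
        (L.hasFDerivAt.comp P (h1 P hP).1.hasFDerivAt).fderiv]; rfl
    refine ⟨h0.clm L, fun P hP => ⟨L.differentiableAt.comp P (h1 P hP).1, ?_, ?_⟩,
      (ih h2).congr (key 1), (ih h3).congr (key 2)⟩
    · rw [key 0 P hP, (h1 P hP).2.1, map_zero]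
    · rw [key 3 P hP, (h1 P hP).2.2, map_zero]

lemma MM.cmul [Fact (4 ≤ R)] (a : E) (hf : MM R c k p q f) :
    MM R c k p q (fun P => a * f P) :=
  hf.clm (ContinuousLinearMap.mul ℝ E a)

lemma MM.neg [Fact (4 ≤ R)] (hf : MM R c k p q f) : MM R c k p q (fun P => - f P) :=
  (hf.cmul (-1)).congr fun P _ => by ring

lemma MM.sub [Fact (4 ≤ R)] (hf : MM R c k p q f) (hg : MM R c k p q g) :
    MM R c k p q (fun P => f P - g P) :=
  (hf.add hg.neg).congr fun P _ => by ring

lemma dd_const (a : E) (i : Fin 4) : dd i (fun _ : Pt => a) = fun _ => 0 := by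
  funext P
  simp [dd]

lemma MM.zero [Fact (4 ≤ R)] : MM R c k p q (fun _ => (0 : E)) := by
  induction k generalizing p q with
  | zero => exact Bd.zero
  | succ k ih =>
    refine ⟨Bd.zero, fun P _ => ⟨differentiableAt_const _, ?_, ?_⟩, ?_, ?_⟩ <;>
      simp only [dd_const]
    · exact ih
    · exact ih

lemma MM.const [Fact (4 ≤ R)] (a : E) : MM R c k 0 (fun _ => 0) (fun _ => a) := by
  have hb : Bd R 0 0 (fun _ : Pt => a) := ⟨‖a‖, norm_nonneg _, fun P _ => by simp⟩
  cases k with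
  | zero => exact hb
  | succ k =>
    refine ⟨hb, fun P _ => ⟨differentiableAt_const _, ?_, ?_⟩, ?_, ?_⟩ <;>
      simp only [dd_const]
    · exact MM.zero
    · exact MM.zero

lemma dd_mul {P : Pt} (hf : DifferentiableAt ℝ f P) (hg : DifferentiableAt ℝ g P) (i : Fin 4) :
    dd i (fun P => f P * g P) P = f P * dd i g P + dd i f P * g P := by
  simp only [dd]
  rw [fderiv_fun_mul hf hg]
  simp [mul_comm]

lemma MM.mul [Fact (4 ≤ R)] (hf : MM R c k p (fun _ => e) f) (hg : MM R c k p' q' g)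
    (hq : Antitone q') : MM R c k (p + p') (fun i => e + q' i) (fun P => f P * g P) := by
  induction k generalizing p p' q' e f g with
  | zero => exact Bd.mul hf hg
  | succ k ih =>
    have hf' := hf.down
    have hg' := hg.down
    obtain ⟨h0, h1, h2, h3⟩ := hf
    obtain ⟨h0', h1', h2', h3'⟩ := hg
    have key : ∀ i, ∀ P ∈ Om R, dd i (fun P => f P * g P) P = f P * dd i g P + dd i f P * g P :=
      fun i P hP => dd_mul (h1 P hP).1 (h1' P hP).1 i
    have hq1 : Antitone (fun i => q' (i + 1)) := fun i j hij => hq (by omega)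
    have hq2 : Antitone (fun i => q' i - c) := fun i j hij => by
      have := hq hij
      simp only; omega
    refine ⟨h0.mul h0', fun P hP => ⟨(h1 P hP).1.mul (h1' P hP).1, ?_, ?_⟩, ?_, ?_⟩
    · rw [key 0 P hP, (h1 P hP).2.1, (h1' P hP).2.1]; ring
    · rw [key 3 P hP, (h1 P hP).2.2, (h1' P hP).2.2]; ring
    · refine MM.congr (MM.add ?_ ?_) (key 1)
      · exact (ih hf' h2' hq1).mono (by omega) (fun i _ => by dsimp only; omega)
      · refine (ih h2 hg' hq).mono (by omega) (fun i _ => ?_)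
        have := hq (Nat.le_succ i)
        simp only [Nat.succ_eq_add_one] at *
        omega
    · refine MM.congr (MM.add ?_ ?_) (key 2)
      · exact (ih hf' h3' hq2).mono (by omega) (fun i _ => by dsimp only; omega)
      · exact (ih h3 hg' hq).mono (by omega) (fun i _ => by dsimp only; omega)

end calculus

section coefs

set_option linter.unusedSectionVars false

variable {E : Type*} [NormedField E] [NormedAlgebra ℝ E]
variable {R : ℝ} {c k : ℕ} {p p' : ℤ} {q q' : ℕ → ℤ} {e e' : ℤ} {f g : Pt → E}

/-- Symbols with constant weight. -/
abbrev Cf (R : ℝ) (c k : ℕ) (p e : ℤ) (f : Pt → E) : Prop := MM R c k p (fun _ => e) f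

lemma MM.cm [Fact (4 ≤ R)] (hf : Cf R c k p e f) (hg : Cf R c k p' e' g) :
    Cf R c k (p + p') (e + e') (fun P => f P * g P) :=
  MM.mul hf hg antitone_const

lemma MM.wk [Fact (4 ≤ R)] (hf : Cf R c k p e f) (hp : p ≤ p') (he : e' ≤ e) : Cf R c k p' e' f :=
  MM.mono hf hp fun _ _ => he

lemma MM.pw [Fact (4 ≤ R)] (hf : Cf R c k p e f) (m : ℕ) :
    Cf R c k (m * p) (m * e) (fun P => f P ^ m) := by
  induction m with
  | zero => simpa using MM.const (1 : E)
  | succ m ih =>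
    refine ((ih.cm hf).congr fun P _ => pow_succ _ _).wk ?_ ?_ <;> push_cast <;> linarith

lemma dd_coord (i j : Fin 4) :
    dd i (fun P : Pt => P j) = fun _ => (Pi.single i 1 : Pt) j := by
  funext P
  have : HasFDerivAt (fun P : Pt => P j) (ContinuousLinearMap.proj (R := ℝ) j) P :=
    (ContinuousLinearMap.proj (R := ℝ) (φ := fun _ : Fin 4 => ℝ) j).hasFDerivAt
  simp only [dd, this.fderiv]
  rfl

lemma Cf.r [Fact (4 ≤ R)] : Cf R c k 1 0 (fun P : Pt => P 1) := by
  have hb : Bd R 1 0 (fun P : Pt => P 1) := ⟨1, zero_le_one, fun P hP => by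
    have := r_gt hP
    simp [abs_of_pos (show 0 < P 1 by linarith)]⟩
  cases k with
  | zero => exact hb
  | succ k =>
    refine ⟨hb, fun P _ => ⟨differentiableAt_apply 1 P, ?_, ?_⟩, ?_, ?_⟩ <;> rw [dd_coord]
    · simp
    · simp
    · exact (MM.const _).mono (by norm_num) (by simp)
    · simpa using MM.zero

lemma Cf.z [Fact (4 ≤ R)] : Cf R c k 0 0 (fun P : Pt => P 2) := by
  have hb : Bd R 0 0 (fun P : Pt => P 2) := ⟨1, zero_le_one, fun P hP => by
    simpa using absz hP⟩
  cases k with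
  | zero => exact hb
  | succ k =>
    refine ⟨hb, fun P _ => ⟨differentiableAt_apply 2 P, ?_, ?_⟩, ?_, ?_⟩ <;> rw [dd_coord]
    · simp
    · simp
    · simpa using MM.zero
    · exact (MM.const _).mono (by norm_num) (by simp)

lemma dd_one_sub_sq (i : Fin 4) (P : Pt) :
    dd i (fun P : Pt => 1 - P 2 ^ 2) P = -(2 * P 2 * (Pi.single i 1 : Pt) 2) := by
  have h : HasFDerivAt (fun P : Pt => P 2) (ContinuousLinearMap.proj (R := ℝ) 2) P :=
    (ContinuousLinearMap.proj (R := ℝ) (φ := fun _ : Fin 4 => ℝ) 2).hasFDerivAt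
  have h2 := (h.pow 2).const_sub 1
  simp only [dd]
  rw [h2.fderiv]
  simp

lemma diff_one_sub_sq (P : Pt) : DifferentiableAt ℝ (fun P : Pt => 1 - P 2 ^ 2) P := by
  fun_prop

lemma Cf.w2 [Fact (4 ≤ R)] : Cf R 2 k 0 2 (fun P : Pt => 1 - P 2 ^ 2) := by
  have hb : Bd R 0 2 (fun P : Pt => 1 - P 2 ^ 2) := ⟨1, zero_le_one, fun P hP => by
    have h1 := ww_sq hP
    simp only
    rw [← h1]
    have h2 : ww P ^ (2 : ℤ) = ww P ^ 2 := zpow_ofNat _ _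
    simp [h2]⟩
  cases k with
  | zero => exact hb
  | succ k =>
    refine ⟨hb, fun P _ => ⟨diff_one_sub_sq P, ?_, ?_⟩, ?_, ?_⟩
    · simp [dd_one_sub_sq]
    · simp [dd_one_sub_sq]
    · exact MM.zero.congr fun P _ => by simp [dd_one_sub_sq]
    · refine ((Cf.z.cmul (-2)).wk le_rfl (by norm_num)).congr fun P _ => ?_
      simp [dd_one_sub_sq]

lemma dd_winv (i : Fin 4) {P : Pt} (hP : P ∈ Om R) :
    dd i (fun P : Pt => (ww P)⁻¹) P
      = (Pi.single i 1 : Pt) 2 * (P 2 * ((ww P)⁻¹ * ((ww P)⁻¹ * (ww P)⁻¹))) := by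
  have h := ((diff_one_sub_sq P).hasFDerivAt.sqrt (one_sub_sq_pos hP).ne')
  have hw : ww P ≠ 0 := (ww_pos hP).ne'
  have h2 := (hasDerivAt_inv hw).comp_hasFDerivAt P (h : HasFDerivAt ww _ P)
  simp only [dd]
  rw [show (fun P : Pt => (ww P)⁻¹) = Inv.inv ∘ ww from rfl, h2.fderiv]
  have := dd_one_sub_sq i P
  simp only [dd] at this
  simp only [smul_apply, this, smul_eq_mul]
  change _ * (1 / (2 * ww P) * _) = _
  field_simp

lemma diff_winv {P : Pt} (hP : P ∈ Om R) : DifferentiableAt ℝ (fun P : Pt => (ww P)⁻¹) P :=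
  DifferentiableAt.inv ((diff_one_sub_sq P).sqrt (one_sub_sq_pos hP).ne') (ww_pos hP).ne'

lemma Cf.winv [Fact (4 ≤ R)] : Cf R 2 k 0 (-1) (fun P : Pt => (ww P)⁻¹) := by
  have hb : Bd R 0 (-1) (fun P : Pt => (ww P)⁻¹) := ⟨1, zero_le_one, fun P hP => by
    simp [abs_of_pos (ww_pos hP)]⟩
  induction k with
  | zero => exact hb
  | succ k ih =>
    refine ⟨hb, fun P hP => ⟨diff_winv hP, ?_, ?_⟩, ?_, ?_⟩
    · simp [dd_winv 0 hP]
    · simp [dd_winv 3 hP]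
    · exact MM.zero.congr fun P hP => by simp [dd_winv 1 hP]
    · refine ((Cf.z.cm (ih.cm (ih.cm ih))).wk (by norm_num) (by norm_num)).congr fun P hP => ?_
      simp [dd_winv 2 hP]

lemma Cf.w [Fact (4 ≤ R)] : Cf R 2 k 0 1 ww := by
  refine ((Cf.w2.cm Cf.winv).wk (by norm_num) (by norm_num)).congr fun P hP => ?_
  rw [← ww_sq hP]
  have := (ww_pos hP).ne'
  field_simp

lemma dd_inv (i : Fin 4) {P : Pt} (hf : DifferentiableAt ℝ f P) (h0 : f P ≠ 0) :
    dd i (fun P => (f P)⁻¹) P = -(dd i f P * ((f P)⁻¹ * (f P)⁻¹)) := by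
  have h := (hasFDerivAt_inv' (𝕜 := ℝ) h0).comp P hf.hasFDerivAt
  simp only [dd]
  rw [show (fun P => (f P)⁻¹) = Inv.inv ∘ f from rfl, h.fderiv]
  simp
  ring

lemma MM.iv [Fact (4 ≤ R)] (hf : Cf R c k p e f) {C : ℝ} (hC : 0 < C)
    (hl : ∀ P ∈ Om R, C * (P 1 ^ p * ww P ^ e) ≤ ‖f P‖) :
    Cf R c k (-p) (-e) (fun P => (f P)⁻¹) := by
  have h0 : ∀ P ∈ Om R, f P ≠ 0 := fun P hP => by
    have := hl P hP
    have h1 := mul_pos hC (wt_pos hP p e)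
    exact norm_pos_iff.1 (h1.trans_le this)
  have hb : Bd R (-p) (-e) (fun P => (f P)⁻¹) := ⟨C⁻¹, by positivity, fun P hP => by
    have := hl P hP
    have h1 := mul_pos hC (wt_pos hP p e)
    rw [norm_inv]
    refine (inv_anti₀ h1 this).trans ?_
    simp only [mul_inv, zpow_neg]
    exact le_rfl⟩
  induction k with
  | zero => exact hb
  | succ k ih =>
    have ih := ih hf.down
    obtain ⟨_, h1, h2, h3⟩ := hf
    refine ⟨hb, fun P hP => ⟨(h1 P hP).1.inv (h0 P hP), ?_, ?_⟩, ?_, ?_⟩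
    · simp [dd_inv 0 (h1 P hP).1 (h0 P hP), (h1 P hP).2.1]
    · simp [dd_inv 3 (h1 P hP).1 (h0 P hP), (h1 P hP).2.2]
    · exact ((MM.cm h2 (ih.cm ih)).wk (by omega) (by omega)).neg.congr
        fun P hP => dd_inv 1 (h1 P hP).1 (h0 P hP)
    · exact ((MM.cm h3 (ih.cm ih)).wk (by omega) (by omega)).neg.congr
        fun P hP => dd_inv 2 (h1 P hP).1 (h0 P hP)

lemma MM.ofReal [Fact (4 ≤ R)] {f : Pt → ℝ} (hf : MM R c k p q f) :
    MM R c k p q (fun P => (f P : ℂ)) := hf.clm Complex.ofRealCLM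

lemma MM.conj [Fact (4 ≤ R)] {f : Pt → ℂ} (hf : MM R c k p q f) :
    MM R c k p q (fun P => conj (f P)) :=
  hf.clm (Complex.conjCLE : ℂ →L[ℝ] ℂ)

lemma MM.re [Fact (4 ≤ R)] {f : Pt → ℂ} (hf : MM R c k p q f) :
    MM R c k p q (fun P => (f P).re) := hf.clm Complex.reCLM

end coefs

section kerrcoefs

variable {R : ℝ} {c k : ℕ} {a : ℝ}

lemma Del_ge (ha : |a| < 1) [Fact (4 ≤ R)] {P : Pt} (hP : P ∈ Om R) :
    1 / 2 * P 1 ^ 2 ≤ Del a (P 1) := by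
  have := r_gt hP
  unfold Del
  nlinarith [sq_nonneg a]

lemma Del_pos (ha : |a| < 1) [Fact (4 ≤ R)] {P : Pt} (hP : P ∈ Om R) : 0 < Del a (P 1) := by
  have := r_gt hP
  have := Del_ge ha hP
  nlinarith

lemma Sig_ge [Fact (4 ≤ R)] (P : Pt) : P 1 ^ 2 ≤ Sig a (P 1) (P 2) := by
  unfold Sig
  nlinarith [mul_nonneg (sq_nonneg a) (sq_nonneg (P 2))]

lemma Sig_pos [Fact (4 ≤ R)] {P : Pt} (hP : P ∈ Om R) : 0 < Sig a (P 1) (P 2) := by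
  have := r_gt hP
  have := Sig_ge (R := R) (a := a) P
  nlinarith

lemma Cf.Del [Fact (4 ≤ R)] : Cf R c k 2 0 (fun P : Pt => Del a (P 1)) := by
  unfold Kerr.Del
  refine MM.add ?_ ((MM.const _).mono (by norm_num) (by simp))
  exact (Cf.r.cm (MM.sub Cf.r ((MM.const _).mono (by norm_num) (by simp)))).wk
    (by norm_num) (by norm_num)

lemma Cf.Sig [Fact (4 ≤ R)] : Cf R c k 2 0 (fun P : Pt => Sig a (P 1) (P 2)) := by
  unfold Kerr.Sig
  refine MM.add ((Cf.r.pw 2).wk (by norm_num) (by norm_num)) ?_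
  exact (((Cf.z.pw 2).cmul (a ^ 2)).wk (by norm_num) (by norm_num))

lemma Cf.Delinv [Fact (4 ≤ R)] (ha : |a| < 1) :
    Cf R c k (-2) 0 (fun P : Pt => (Kerr.Del a (P 1))⁻¹) :=
  (Cf.Del.iv (C := 1 / 2) (by norm_num) fun P hP => by
    have := Del_ge ha hP
    rw [Real.norm_eq_abs, abs_of_pos (Del_pos ha hP)]
    have h2 : P 1 ^ (2 : ℤ) = P 1 ^ 2 := zpow_ofNat _ _
    simpa [h2] using this)

lemma Cf.Siginv [Fact (4 ≤ R)] :
    Cf R c k (-2) 0 (fun P : Pt => (Kerr.Sig a (P 1) (P 2))⁻¹) :=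
  (Cf.Sig.iv (C := 1) (by norm_num) fun P hP => by
    have := Sig_ge (R := R) (a := a) P
    rw [Real.norm_eq_abs, abs_of_pos (Sig_pos hP)]
    have h2 : P 1 ^ (2 : ℤ) = P 1 ^ 2 := zpow_ofNat _ _
    simpa [h2] using this)

lemma Cf.w2inv [Fact (4 ≤ R)] : Cf R 2 k 0 (-2) (fun P : Pt => (1 - P 2 ^ 2)⁻¹) := by
  refine ((Cf.winv.cm Cf.winv).wk (by norm_num) (by norm_num)).congr fun P hP => ?_
  rw [← ww_sq hP, ← mul_inv, sq]

/-- `r - i a z`. -/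
def zeta (a : ℝ) (P : Pt) : ℂ := (P 1 : ℂ) - Complex.I * (a : ℂ) * (P 2 : ℂ)

lemma Cf.zeta [Fact (4 ≤ R)] : Cf R c k 1 0 (zeta a) := by
  refine MM.sub (MM.ofReal Cf.r) ?_
  exact (((MM.ofReal Cf.z).cmul (Complex.I * (a : ℂ))).mono (by norm_num) (by simp))

lemma zeta_norm [Fact (4 ≤ R)] {P : Pt} (hP : P ∈ Om R) : P 1 ≤ ‖zeta a P‖ := by
  have := Complex.re_le_norm (Kerr.zeta a P)
  simpa [Kerr.zeta] using this

lemma zeta_ne [Fact (4 ≤ R)] {P : Pt} (hP : P ∈ Om R) : Kerr.zeta a P ≠ 0 := by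
  have := zeta_norm (a := a) hP
  have h2 := r_gt hP
  exact norm_pos_iff.1 (by linarith)

lemma Cf.rho [Fact (4 ≤ R)] : Cf R c k (-1) 0 (rhoC a) := by
  refine (MM.neg ((Cf.zeta (a := a)).iv (C := 1) one_pos fun P hP => ?_)).congr fun P _ => ?_
  · simpa using zeta_norm hP
  · simp only [rhoC, Kerr.zeta, neg_div, one_div]

lemma Cf.rhoinv4 [Fact (4 ≤ R)] : Cf R c k 4 0 (fun P => rhoC a P ^ (-4 : ℤ)) := by
  refine (((Cf.zeta (a := a)).pw 4).wk (by norm_num) (by norm_num)).congr fun P hP => ?_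
  simp only [rhoC]
  rw [show (-4 : ℤ) = -((4 : ℕ) : ℤ) by norm_num, zpow_neg, zpow_natCast, neg_div, one_div]
  rw [Even.neg_pow (by decide), inv_pow, inv_inv]
  rfl

end kerrcoefs

section metric

set_option linter.unusedSectionVars false
set_option linter.unusedSimpArgs false

variable {R a : ℝ} {k : ℕ} {P : Pt} [Fact (4 ≤ R)]

lemma g00_eq (P : Pt) : g a P 0 0 = -1 + 2 * (P 1 * (Sig a (P 1) (P 2))⁻¹) := by
  simp [g, gFam, Sig]; ring
lemma g03_eq (P : Pt) :
    g a P 0 3 = -(2 * a) * (P 1 * ((1 - P 2 ^ 2) * (Sig a (P 1) (P 2))⁻¹)) := by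
  simp [g, gFam, Sig]; ring
lemma g30_eq (P : Pt) : g a P 3 0 = g a P 0 3 := by simp [g, gFam]
lemma g11_eq (P : Pt) : g a P 1 1 = Sig a (P 1) (P 2) * (Del a (P 1))⁻¹ := by
  simp [g, gFam, Sig, Del, div_eq_mul_inv]; left; ring
lemma g22_eq (P : Pt) : g a P 2 2 = Sig a (P 1) (P 2) * (1 - P 2 ^ 2)⁻¹ := by
  simp [g, gFam, Sig, div_eq_mul_inv]
lemma g33_eq (P : Pt) : g a P 3 3 = (1 - P 2 ^ 2) * ((Sig a (P 1) (P 2))⁻¹ *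
    (2 * a ^ 2 * (P 1 * (1 - P 2 ^ 2)) + (a ^ 2 + P 1 ^ 2) * Sig a (P 1) (P 2))) := by
  simp [g, gFam, Sig]; ring
lemma g01_eq (P : Pt) : g a P 0 1 = 0 := by simp [g, gFam]
lemma g02_eq (P : Pt) : g a P 0 2 = 0 := by simp [g, gFam]
lemma g10_eq (P : Pt) : g a P 1 0 = 0 := by simp [g, gFam]
lemma g12_eq (P : Pt) : g a P 1 2 = 0 := by simp [g, gFam]
lemma g13_eq (P : Pt) : g a P 1 3 = 0 := by simp [g, gFam]
lemma g20_eq (P : Pt) : g a P 2 0 = 0 := by simp [g, gFam]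
lemma g21_eq (P : Pt) : g a P 2 1 = 0 := by simp [g, gFam]
lemma g23_eq (P : Pt) : g a P 2 3 = 0 := by simp [g, gFam]
lemma g31_eq (P : Pt) : g a P 3 1 = 0 := by simp [g, gFam]
lemma g32_eq (P : Pt) : g a P 3 2 = 0 := by simp [g, gFam]

lemma Cg00 : Cf R 2 k 0 0 (fun P => g a P 0 0) := by
  simp only [g00_eq]
  refine MM.add (MM.const _) (((Cf.r.cm Cf.Siginv).cmul 2).wk (by norm_num) (by norm_num))
lemma Cg03 : Cf R 2 k (-1) 2 (fun P => g a P 0 3) := by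
  simp only [g03_eq]
  exact (((Cf.r.cm (Cf.w2.cm Cf.Siginv)).cmul _).wk (by norm_num) (by norm_num))
lemma Cg11 (ha : |a| < 1) : Cf R 2 k 0 0 (fun P => g a P 1 1) := by
  simp only [g11_eq]
  exact ((Cf.Sig.cm (Cf.Delinv ha)).wk (by norm_num) (by norm_num))
lemma Cg22 : Cf R 2 k 2 (-2) (fun P => g a P 2 2) := by
  simp only [g22_eq]
  exact ((Cf.Sig.cm Cf.w2inv).wk (by norm_num) (by norm_num))
lemma Cf.ra : Cf R 2 k 2 0 (fun P : Pt => a ^ 2 + P 1 ^ 2) :=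
  MM.add ((MM.const _).wk (by norm_num) (by norm_num)) ((Cf.r.pw 2).wk (by norm_num) (by norm_num))
lemma Cg33 : Cf R 2 k 2 2 (fun P => g a P 3 3) := by
  simp only [g33_eq]
  refine ((Cf.w2.cm (Cf.Siginv.cm (p' := 4) (e' := 0) (MM.add ?_ ?_))).wk (by norm_num)
    (by norm_num))
  · exact ((Cf.r.cm Cf.w2).cmul _).wk (by norm_num) (by norm_num)
  · exact (Cf.ra.cm Cf.Sig).wk (by norm_num) (by norm_num)

/-- Explicit inverse metric. -/
def gI (a : ℝ) (P : Pt) : Matrix (Fin 4) (Fin 4) ℝ :=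
  Matrix.of
    ![![-(((P 1 ^ 2 + a ^ 2) * Sig a (P 1) (P 2) + 2 * a ^ 2 * P 1 * (1 - P 2 ^ 2))
          / (Sig a (P 1) (P 2) * Del a (P 1))), 0, 0,
        -(2 * a * P 1 / (Sig a (P 1) (P 2) * Del a (P 1)))],
      ![0, Del a (P 1) / Sig a (P 1) (P 2), 0, 0],
      ![0, 0, (1 - P 2 ^ 2) / Sig a (P 1) (P 2), 0],
      ![-(2 * a * P 1 / (Sig a (P 1) (P 2) * Del a (P 1))), 0, 0,
        (Sig a (P 1) (P 2) - 2 * P 1) / (Sig a (P 1) (P 2) * Del a (P 1) * (1 - P 2 ^ 2))]]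

lemma gInv_eq (ha : |a| < 1) (hP : P ∈ Om R) : gInv a P = gI a P := by
  have hS := (Sig_pos (a := a) hP).ne'
  have hD := (Del_pos ha hP).ne'
  have hw := (one_sub_sq_pos hP).ne'
  apply Matrix.inv_eq_right_inv
  have hSz : P 1 ^ 2 = Sig a (P 1) (P 2) - a ^ 2 * P 2 ^ 2 := by unfold Sig; ring
  ext i j
  fin_cases i <;> fin_cases j <;>
    simp [Matrix.mul_apply, Fin.sum_univ_four, g00_eq, g03_eq, g30_eq, g11_eq, g22_eq, g33_eq,
      g01_eq, g02_eq, g10_eq, g12_eq, g13_eq, g20_eq, g21_eq, g23_eq, g31_eq, g32_eq, gI] <;>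
    field_simp <;> (try simp only [Sig, Del]) <;> (try ring)


lemma Ci00 (ha : |a| < 1) : Cf R 2 k 0 0 (fun P => gInv a P 0 0) := by
  have h : Cf R 2 k 0 0 (fun P => -(((a ^ 2 + P 1 ^ 2) * Sig a (P 1) (P 2)
      + 2 * a ^ 2 * (P 1 * (1 - P 2 ^ 2))) * ((Sig a (P 1) (P 2))⁻¹ * (Del a (P 1))⁻¹))) := by
    refine MM.neg ((MM.cm (p := 4) (e := 0) (MM.add ?_ ?_) ((Cf.Siginv (a := a)).cm (Cf.Delinv ha))).wk
      (by norm_num) (by norm_num))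
    · exact (Cf.ra.cm Cf.Sig).wk (by norm_num) (by norm_num)
    · exact ((Cf.r.cm Cf.w2).cmul _).wk (by norm_num) (by norm_num)
  refine h.congr fun P hP => ?_
  simp [gInv_eq ha hP, gI]
  ring
lemma Ci03 (ha : |a| < 1) : Cf R 2 k (-3) 0 (fun P => gInv a P 0 3) := by
  refine (((Cf.r.cm ((Cf.Siginv (a := a)).cm (Cf.Delinv ha))).cmul (-(2 * a))).wk
    (by norm_num) (by norm_num)).congr fun P hP => ?_
  simp [gInv_eq ha hP, gI]
  ring
lemma gInv30 (ha : |a| < 1) (hP : P ∈ Om R) : gInv a P 3 0 = gInv a P 0 3 := by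
  simp [gInv_eq ha hP, gI]
lemma Ci30 (ha : |a| < 1) : Cf R 2 k (-3) 0 (fun P => gInv a P 3 0) :=
  (Ci03 ha).congr fun _ hP => gInv30 ha hP
lemma Ci11 (ha : |a| < 1) : Cf R 2 k 0 0 (fun P => gInv a P 1 1) := by
  refine (((Cf.Del (a := a)).cm (Cf.Siginv (a := a))).wk (by norm_num) (by norm_num)).congr fun P hP => ?_
  simp [gInv_eq ha hP, gI]
  rfl
lemma Ci22 (ha : |a| < 1) : Cf R 2 k (-2) 2 (fun P => gInv a P 2 2) := by
  refine ((Cf.w2.cm (Cf.Siginv (a := a))).wk (by norm_num) (by norm_num)).congr fun P hP => ?_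
  simp [gInv_eq ha hP, gI]
  rfl
lemma Ci33 (ha : |a| < 1) : Cf R 2 k (-2) (-2) (fun P => gInv a P 3 3) := by
  have h : Cf R 2 k 2 0 (fun P => Sig a (P 1) (P 2) - 2 * P 1) :=
    MM.sub Cf.Sig ((Cf.r.cmul 2).wk (by norm_num) (by norm_num))
  refine ((h.cm ((Cf.Siginv (a := a)).cm ((Cf.Delinv ha).cm Cf.w2inv))).wk
    (by norm_num) (by norm_num)).congr fun P hP => ?_
  simp [gInv_eq ha hP, gI, div_eq_mul_inv]
  left; ring

lemma gInv_zeros (ha : |a| < 1) (hP : P ∈ Om R) :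
    gInv a P 0 1 = 0 ∧ gInv a P 0 2 = 0 ∧ gInv a P 1 0 = 0 ∧ gInv a P 1 2 = 0 ∧ gInv a P 1 3 = 0 ∧
    gInv a P 2 0 = 0 ∧ gInv a P 2 1 = 0 ∧ gInv a P 2 3 = 0 ∧ gInv a P 3 1 = 0 ∧
    gInv a P 3 2 = 0 := by
  simp [gInv_eq ha hP, gI]

lemma Cg_all (ha : |a| < 1) (i j : Fin 4) : ∃ p e, Cf R 2 1 p e (fun P => g a P i j) := by
  have z : ∀ i j, (∀ P, g a P i j = 0) → ∃ p e, Cf R 2 1 p e (fun P => g a P i j) :=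
    fun i j h => ⟨0, 0, by simp only [h]; exact MM.zero⟩
  have h30 : Cf R 2 1 (-1) 2 (fun P => g a P 3 0) := by simp only [g30_eq]; exact Cg03
  fin_cases i <;> fin_cases j <;>
    first
    | exact ⟨_, _, Cg00⟩
    | exact ⟨_, _, Cg03⟩
    | exact ⟨_, _, h30⟩
    | exact ⟨_, _, Cg11 ha⟩
    | exact ⟨_, _, Cg22⟩
    | exact ⟨_, _, Cg33⟩
    | exact z _ _ fun P => by simp [g, gFam]

lemma pd0_g (ha : |a| < 1) (hP : P ∈ Om R) (i j : Fin 4) : pd 0 (fun q => g a q i j) P = 0 := by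
  obtain ⟨p, e, h⟩ := Cg_all (R := R) ha i j
  exact (h.2.1 P hP).2.1
lemma pd3_g (ha : |a| < 1) (hP : P ∈ Om R) (i j : Fin 4) : pd 3 (fun q => g a q i j) P = 0 := by
  obtain ⟨p, e, h⟩ := Cg_all (R := R) ha i j
  exact (h.2.1 P hP).2.2
lemma pd_const' (i : Fin 4) (x : ℝ) (P : Pt) : pd i (fun _ => x) P = 0 := by
  simp [pd]

/-- All vanishing Christoffel symbols that are needed. -/
lemma Chr_zeros (ha : |a| < 1) (hP : P ∈ Om R) :
    (∀ l ∈ ({1, 2} : Finset (Fin 4)), ∀ b ∈ ({0, 3} : Finset (Fin 4)),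
      Chr a l 1 b P = 0 ∧ Chr a l b 1 P = 0) ∧
    (∀ l ∈ ({0, 3} : Finset (Fin 4)), Chr a l 1 1 P = 0 ∧ Chr a l 1 2 P = 0 ∧
      Chr a l 2 1 P = 0 ∧ Chr a l 2 2 P = 0) ∧
    (∀ l ∈ ({0, 3} : Finset (Fin 4)), ∀ b ∈ ({0, 3} : Finset (Fin 4)),
      ∀ b' ∈ ({0, 3} : Finset (Fin 4)), Chr a l b b' P = 0) := by
  obtain ⟨i01, i02, i10, i12, i13, i20, i21, i23, i31, i32⟩ := gInv_zeros ha hP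
  have p0 := pd0_g ha hP
  have p3 := pd3_g ha hP
  simp [Chr, Fin.sum_univ_four, i01, i02, i10, i12, i13, i20, i21, i23, i31, i32,
    p0, p3, pd_const', g01_eq, g02_eq, g10_eq, g12_eq, g13_eq, g20_eq, g21_eq, g23_eq, g31_eq, g32_eq]

section chr

/-- symmetric-index identity -/
lemma Chr_symm (l m n : Fin 4) (P : Pt) : Chr a l m n P = Chr a l n m P := by
  unfold Chr
  congr 1
  refine Finset.sum_congr rfl fun s _ => ?_
  have : (fun q => g a q m n) = fun q => g a q n m := by
    funext q
    fin_cases m <;> fin_cases n <;> simp [g, gFam]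
  rw [this]; ring

lemma g30_fun : (fun q => g a q 3 0) = fun q => g a q 0 3 := funext g30_eq

end chr

end metric

section tetrad

set_option linter.unusedSectionVars false
set_option linter.unusedSimpArgs false

variable {R a : ℝ} {k : ℕ} {P : Pt} [Fact (4 ≤ R)]

/-- Growth class of the real null legs. -/
structure VU (R : ℝ) (u : Pt → Fin 4 → ℂ) : Prop where
  h0 : ∀ k, Cf R 2 k 0 0 (fun P => u P 0)
  h1 : ∀ k, Cf R 2 k 0 0 (fun P => u P 1)
  h2 : ∀ P, u P 2 = 0
  h3 : ∀ k, Cf R 2 k (-2) 0 (fun P => u P 3)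

/-- Growth class of the complex null legs. -/
structure VV (R : ℝ) (v : Pt → Fin 4 → ℂ) : Prop where
  h0 : ∀ k, Cf R 2 k (-1) 1 (fun P => v P 0)
  h1 : ∀ P, v P 1 = 0
  h2 : ∀ k, Cf R 2 k (-1) 1 (fun P => v P 2)
  h3 : ∀ k, Cf R 2 k (-1) (-1) (fun P => v P 3)

/-- Growth class of the lowered real null legs. -/
structure WU (R : ℝ) (u : Pt → Fin 4 → ℂ) : Prop where
  h0 : ∀ k, Cf R 2 k 0 0 (fun P => u P 0)
  h1 : ∀ k, Cf R 2 k 0 0 (fun P => u P 1)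
  h2 : ∀ P, u P 2 = 0
  h3 : ∀ k, Cf R 2 k 0 2 (fun P => u P 3)

/-- Growth class of the lowered complex null legs. -/
structure WV (R : ℝ) (v : Pt → Fin 4 → ℂ) : Prop where
  h0 : ∀ k, Cf R 2 k (-1) 1 (fun P => v P 0)
  h1 : ∀ P, v P 1 = 0
  h2 : ∀ k, Cf R 2 k 1 (-1) (fun P => v P 2)
  h3 : ∀ k, Cf R 2 k 1 1 (fun P => v P 3)

lemma VU_l (ha : |a| < 1) : VU R (lvec a) where
  h0 k := by
    refine (MM.ofReal (((Cf.ra (a := a)).cm (Cf.Delinv ha)).wk (p' := 0) (e' := 0) (by norm_num)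
      (by norm_num))).congr (g := fun P => lvec a P 0) fun P hP => ?_
    simp [lvec]; ring
  h1 k := (MM.const 1).congr fun P hP => by simp [lvec]
  h2 P := by simp [lvec]
  h3 k := (MM.ofReal ((Cf.Delinv ha).cmul a)).congr fun P hP => by
    simp [lvec]; ring

lemma VU_n : VU R (nvec a) where
  h0 k := by
    refine (MM.ofReal ((((Cf.ra (a := a)).cm (Cf.Siginv (a := a))).cmul (1 / 2)).wk (p' := 0) (e' := 0)
      (by norm_num) (by norm_num))).congr (g := fun P => nvec a P 0) fun P hP => ?_
    simp [nvec]; ring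
  h1 k := by
    refine (MM.ofReal ((((Cf.Del (a := a)).cm (Cf.Siginv (a := a))).cmul (-1 / 2)).wk (p' := 0)
      (e' := 0) (by norm_num) (by norm_num))).congr (g := fun P => nvec a P 1) fun P hP => ?_
    simp [nvec]; ring
  h2 P := by simp [nvec]
  h3 k := (MM.ofReal ((Cf.Siginv (a := a)).cmul (a / 2))).congr fun P hP => by
    simp [nvec]; ring

lemma Cpre : Cf R 2 k (-1) 1 (fun P => conj (rhoC a P) * (ww P : ℂ)) :=
  ((MM.conj (Cf.rho (a := a))).cm (MM.ofReal Cf.w)).wk (by norm_num) (by norm_num)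

lemma VV_m : VV R (mvec a) where
  h0 k := ((Cpre (a := a)).cmul (-(1 / (Real.sqrt 2 : ℂ)) * (Complex.I * a))).congr fun P hP => by
    simp [mvec, ww]; ring
  h1 P := by simp [mvec]
  h2 k := ((Cpre (a := a)).cmul (1 / (Real.sqrt 2 : ℂ))).congr fun P hP => by
    simp [mvec, ww]; ring
  h3 k := by
    refine ((((Cpre (a := a)).cm (MM.ofReal Cf.w2inv)).cmul
      (-(1 / (Real.sqrt 2 : ℂ)) * Complex.I)).wk (by norm_num) (by norm_num)).congr fun P hP => ?_
    simp [mvec, ww]; ring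

lemma VV_mb : VV R (mbvec a) where
  h0 k := (VV_m.h0 k).conj
  h1 P := by simp [mbvec, VV_m.h1 (R := R)]
  h2 k := (VV_m.h2 k).conj
  h3 k := (VV_m.h3 k).conj

/-- Lowering an index. -/
def low (a : ℝ) (u : Pt → Fin 4 → ℂ) (P : Pt) (i : Fin 4) : ℂ :=
  ∑ j : Fin 4, (g a P i j : ℂ) * u P j

lemma VU.low {u : Pt → Fin 4 → ℂ} (ha : |a| < 1) (h : VU R u) : WU R (low a u) where
  h0 k := by
    refine (MM.add (((MM.ofReal (Cg00 (a := a))).cm (h.h0 k)).wk (by norm_num) (by norm_num))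
      (((MM.ofReal (Cg03 (a := a))).cm (h.h3 k)).wk (by norm_num) (by norm_num))).congr
      fun P hP => ?_
    simp [Kerr.low, Fin.sum_univ_four, g01_eq, g02_eq]
  h1 k := by
    refine (((MM.ofReal (Cg11 ha)).cm (h.h1 k)).wk (by norm_num) (by norm_num)).congr
      fun P hP => ?_
    simp [Kerr.low, Fin.sum_univ_four, g10_eq, g12_eq, g13_eq]
  h2 P := by simp [Kerr.low, Fin.sum_univ_four, g20_eq, g21_eq, g23_eq, h.h2]
  h3 k := by
    refine (MM.add (((MM.ofReal (Cg03 (a := a))).cm (h.h0 k)).wk (by norm_num) (by norm_num))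
      (((MM.ofReal (Cg33 (a := a))).cm (h.h3 k)).wk (by norm_num) (by norm_num))).congr
      fun P hP => ?_
    simp [Kerr.low, Fin.sum_univ_four, g30_eq, g31_eq, g32_eq]

lemma VV.low {v : Pt → Fin 4 → ℂ} (h : VV R v) : WV R (low a v) where
  h0 k := by
    refine (MM.add (((MM.ofReal (Cg00 (a := a))).cm (h.h0 k)).wk (by norm_num) (by norm_num))
      (((MM.ofReal (Cg03 (a := a))).cm (h.h3 k)).wk (by norm_num) (by norm_num))).congr
      fun P hP => ?_
    simp [Kerr.low, Fin.sum_univ_four, g01_eq, g02_eq]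
  h1 P := by simp [Kerr.low, Fin.sum_univ_four, g10_eq, g12_eq, g13_eq, h.h1]
  h2 k := by
    refine (((MM.ofReal (Cg22 (a := a))).cm (h.h2 k)).wk (by norm_num) (by norm_num)).congr
      fun P hP => ?_
    simp [Kerr.low, Fin.sum_univ_four, g20_eq, g21_eq, g23_eq]
  h3 k := by
    refine (MM.add (((MM.ofReal (Cg03 (a := a))).cm (h.h0 k)).wk (by norm_num) (by norm_num))
      (((MM.ofReal (Cg33 (a := a))).cm (h.h3 k)).wk (by norm_num) (by norm_num))).congr
      fun P hP => ?_
    simp [Kerr.low, Fin.sum_univ_four, g30_eq, g31_eq, g32_eq]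

/-! spin coefficients -/

lemma Crr : Cf R 2 k (-2) 0 (fun P => rhoC a P * conj (rhoC a P)) :=
  ((Cf.rho (a := a)).cm (MM.conj (Cf.rho (a := a)))).wk (by norm_num) (by norm_num)

lemma Cmu : Cf R 2 k (-1) 0 (muNP a) := by
  refine ((((Cf.rho (a := a)).cm ((Crr (a := a)).cm (MM.ofReal (Cf.Del (a := a))))).cmul (1 / 2)).wk
    (by norm_num) (by norm_num)).congr fun P hP => ?_
  simp only [muNP]; ring

lemma Cgam : Cf R 2 k (-1) 0 (gamNP a) := by
  have h : Cf R 2 k 1 0 (fun P : Pt => (P 1 : ℂ) - 1) :=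
    MM.sub (MM.ofReal Cf.r) ((MM.const 1).wk (by norm_num) (by norm_num))
  refine (MM.add (Cmu (a := a)) ((((Crr (a := a)).cm h).cmul (1 / 2)).wk (by norm_num) (by norm_num))).congr
    fun P hP => ?_
  simp only [gamNP]; ring

lemma Ctau : Cf R 2 k (-1) (-1) (tauNP a) := by
  refine ((((Crr (a := a)).cm (MM.ofReal Cf.w)).cmul (-Complex.I * a / (Real.sqrt 2 : ℂ))).wk
    (by norm_num) (by norm_num)).congr fun P hP => ?_
  simp only [tauNP, ww]; ring

lemma Cpi : Cf R 2 k (-1) (-1) (piNP a) := by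
  refine ((((Cf.rho (a := a)).cm ((Cf.rho (a := a)).cm (MM.ofReal Cf.w))).cmul
    (Complex.I * a / (Real.sqrt 2 : ℂ))).wk (by norm_num) (by norm_num)).congr fun P hP => ?_
  simp only [piNP, ww]; ring

lemma Cbet : Cf R 2 k (-1) (-1) (betNP a) := by
  refine ((((MM.conj (Cf.rho (a := a))).cm ((MM.ofReal Cf.z).cm (MM.ofReal Cf.winv))).cmul
    (-1 / (2 * (Real.sqrt 2 : ℂ)))).wk (by norm_num) (by norm_num)).congr fun P hP => ?_
  simp only [betNP, ww, Complex.ofReal_inv]; ring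

lemma Calp : Cf R 2 k (-1) (-1) (alpNP a) := MM.sub (Cpi (a := a)) (MM.conj (Cbet (a := a)))

/-! operators -/

variable {v : Pt → Fin 4 → ℂ} {cc f : Pt → ℂ} {p : ℤ} {q : ℕ → ℤ}

lemma opD_eq (hf : MM R 2 (k + 1) p q f) (hP : P ∈ Om R) :
    opD v cc f P = v P 1 * dd 1 f P + v P 2 * dd 2 f P + cc P * f P := by
  have h := hf.2.1 P hP
  have h0 : pdC 0 f P = 0 := h.2.1
  have h3 : pdC 3 f P = 0 := h.2.2
  simp [opD, dirD, Fin.sum_univ_four, h0, h3]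
  rfl

lemma opV (hv : VV R v) (hc : ∀ k, Cf R 2 k (-1) (-1) cc) (hf : MM R 2 (k + 1) p q f)
    (hq : Antitone q) : MM R 2 k (p - 1) (fun i => q i - 1) (opD v cc f) := by
  have hq2 : Antitone (fun i => q i - (2 : ℕ)) := fun i j hij => by
    have := hq hij
    simp only; omega
  refine (MM.add (((hv.h2 k).mul hf.2.2.2 hq2).mono (by omega) ?_)
    (((hc k).mul hf.down hq).mono (by omega) ?_)).congr fun P hP => ?_
  · intro i _; push_cast; omega
  · intro i _; omega
  · rw [opD_eq hf hP, hv.h1]; ring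

lemma opU (hv : VU R v) (hc : ∀ k, Cf R 2 k (-1) 0 cc) (hf : MM R 2 (k + 1) p q f)
    (hq : Antitone q) : MM R 2 k (p - 1) (fun i => q (i + 1)) (opD v cc f) := by
  have hq2 : Antitone (fun i => q (i + 1)) := fun i j hij => hq (by omega)
  refine (MM.add (((hv.h1 k).mul hf.2.2.1 hq2).mono (by omega) ?_)
    (((hc k).mul hf.down hq).mono (by omega) ?_)).congr fun P hP => ?_
  · intro i _; omega
  · intro i _
    have := hq (Nat.le_succ i)
    simp only [Nat.succ_eq_add_one] at this
    omega
  · rw [opD_eq hf hP, hv.h2]; ring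

/-- Weight sequences of order one. -/
def qq (x y : ℤ) : ℕ → ℤ := fun i => if i = 0 then x else y

/-- Weight sequence of the Hertz potential. -/
def qpsi : ℕ → ℤ := fun i => if i ≤ 1 then 2 else 0

lemma qq_anti {x y : ℤ} (h : y ≤ x) : Antitone (qq x y) := fun i j hij => by
  unfold qq; split_ifs <;> omega

lemma qpsi_anti : Antitone qpsi := fun i j hij => by
  unfold qpsi; split_ifs <;> omega

section
variable {E : Type*} [NormedField E] [NormedAlgebra ℝ E] {f' g' : Pt → E}

lemma MM.toq {p p' : ℤ} {q : ℕ → ℤ} {x y : ℤ} (h : MM R 2 1 p q f') (hp : p ≤ p') (h0 : x ≤ q 0)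
    (h1 : y ≤ q 1) : MM R 2 1 p' (qq x y) f' := by
  refine h.mono hp fun i hi => ?_
  interval_cases i
  · exact h0
  · exact h1

lemma MM.mq {p p' p'' e x y x' y' : ℤ} (hf : Cf R 2 1 p e f') (hg : MM R 2 1 p' (qq x y) g')
    (hxy : y ≤ x) (hp : p + p' ≤ p'') (hx : x' ≤ e + x) (hy : y' ≤ e + y) :
    MM R 2 1 p'' (qq x' y') (fun P => f' P * g' P) :=
  (hf.mul hg (qq_anti hxy)).toq hp hx hy
end

/-- The common algebraic form of the CCK operators. -/
def Hg (u v : Pt → Fin 4 → ℂ) (N Y X : Pt → ℂ) (P : Pt) (i j : Fin 4) : ℂ :=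
  -(u P i * u P j * N P + v P i * v P j * Y P
    - (1 / 2) * (u P i * v P j + u P j * v P i) * X P)

/-- Growth class of metric perturbations. -/
structure HH (R : ℝ) (h : Pt → Matrix (Fin 4) (Fin 4) ℝ) : Prop where
  h00 : MM R 2 1 (-3) (qq 0 0) (fun P => h P 0 0)
  h03 : MM R 2 1 (-2) (qq 2 0) (fun P => h P 0 3)
  h30 : MM R 2 1 (-2) (qq 2 0) (fun P => h P 3 0)
  h33 : MM R 2 1 (-1) (qq 2 2) (fun P => h P 3 3)
  h11 : MM R 2 1 (-3) (qq 0 0) (fun P => h P 1 1)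
  h12 : MM R 2 1 (-2) (qq 0 (-2)) (fun P => h P 1 2)
  h21 : MM R 2 1 (-2) (qq 0 (-2)) (fun P => h P 2 1)
  h22 : MM R 2 1 (-1) (qq (-2) (-2)) (fun P => h P 2 2)
  h10 : MM R 2 1 5 (qq (-5) (-5)) (fun P => h P 1 0)
  h13 : MM R 2 1 5 (qq (-5) (-5)) (fun P => h P 1 3)

lemma Hg_symm (u v : Pt → Fin 4 → ℂ) (N Y X : Pt → ℂ) (P : Pt) (i j : Fin 4) :
    Hg u v N Y X P i j = Hg u v N Y X P j i := by
  unfold Hg; ring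

lemma Hg_gen {u v : Pt → Fin 4 → ℂ} {N Y X : Pt → ℂ} (i j : Fin 4)
    {pu pv px eu ev ex p x y : ℤ}
    (huu : Cf R 2 1 pu eu (fun P => u P i * u P j))
    (hvv : Cf R 2 1 pv ev (fun P => v P i * v P j))
    (huv : Cf R 2 1 px ex (fun P => u P i * v P j + u P j * v P i))
    (hN : MM R 2 1 (-3) (qq 0 0) N) (hY : MM R 2 1 (-3) (qq 0 0) Y)
    (hX : MM R 2 1 (-3) (qq 1 (-1)) X)
    (h1 : pu ≤ p + 3 ∧ pv ≤ p + 3 ∧ px ≤ p + 3) (h2 : x ≤ eu ∧ x ≤ ev ∧ x ≤ ex + 1)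
    (h3 : y ≤ eu ∧ y ≤ ev ∧ y ≤ ex - 1) :
    MM R 2 1 p (qq x y) (fun P => Hg u v N Y X P i j) := by
  refine (MM.neg (MM.sub (MM.add
    (huu.mq hN le_rfl (by omega) (by omega) (by omega))
    (hvv.mq hY le_rfl (by omega) (by omega) (by omega)))
    ((huv.mq hX (by norm_num) (by omega) (by omega) (by omega)).cmul (1 / 2)))).congr
    fun P hP => ?_
  unfold Hg; ring

lemma HH_of {u v : Pt → Fin 4 → ℂ} {N Y X : Pt → ℂ} {h : Pt → Matrix (Fin 4) (Fin 4) ℝ}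
    (hu : WU R u) (hv : WV R v)
    (hN : MM R 2 1 (-3) (qq 0 0) N) (hY : MM R 2 1 (-3) (qq 0 0) Y)
    (hX : MM R 2 1 (-3) (qq 1 (-1)) X)
    (hh : ∀ P i j, h P i j = (Hg u v N Y X P i j + conj (Hg u v N Y X P i j)).re) :
    HH R h := by
  have key : ∀ i j p q, MM R 2 1 p q (fun P => Hg u v N Y X P i j) →
      MM R 2 1 p q (fun P => h P i j) := fun i j p q hm =>
    (MM.re (hm.add hm.conj)).congr fun P _ => hh P i j
  have key2 : ∀ i j p q, MM R 2 1 p q (fun P => h P i j) →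
      MM R 2 1 p q (fun P => h P j i) := fun i j p q hm =>
    hm.congr fun P _ => by rw [hh, hh, Hg_symm]
  have z2 := hu.h2
  have z1 := hv.h1
  have zz : ∀ f : Pt → ℂ, (∀ P, f P = 0) → Cf R 2 1 (-10) 10 f :=
    fun f hf => MM.zero.congr fun P _ => hf P
  have h03 : MM R 2 1 (-2) (qq 2 0) (fun P => h P 0 3) := by
    refine key _ _ _ _ (Hg_gen 0 3 ((hu.h0 1).cm (hu.h3 1)) ((hv.h0 1).cm (hv.h3 1))
      (px := 1) (ex := 1)
      (MM.add (((hu.h0 1).cm (hv.h3 1)).wk (by norm_num) (by norm_num))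
        (((hu.h3 1).cm (hv.h0 1)).wk (by norm_num) (by norm_num)))
      hN hY hX (by norm_num) (by norm_num) (by norm_num))
  have h12 : MM R 2 1 (-2) (qq 0 (-2)) (fun P => h P 1 2) := by
    refine key _ _ _ _ (Hg_gen 1 2 (zz _ fun P => by simp [z2]) (zz _ fun P => by simp [z1])
      (px := 1) (ex := -1)
      ((((hu.h1 1).cm (hv.h2 1)).wk (by norm_num) (by norm_num)).congr fun P _ => by
        simp [z1])
      hN hY hX (by norm_num) (by norm_num) (by norm_num))
  refine ⟨?_, h03, key2 _ _ _ _ h03, ?_, ?_, h12, key2 _ _ _ _ h12, ?_, ?_, ?_⟩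
  · exact key _ _ _ _ (Hg_gen 0 0 ((hu.h0 1).cm (hu.h0 1)) ((hv.h0 1).cm (hv.h0 1))
      (MM.add ((hu.h0 1).cm (hv.h0 1)) ((hu.h0 1).cm (hv.h0 1)))
      hN hY hX (by norm_num) (by norm_num) (by norm_num))
  · exact key _ _ _ _ (Hg_gen 3 3 ((hu.h3 1).cm (hu.h3 1)) ((hv.h3 1).cm (hv.h3 1))
      (MM.add ((hu.h3 1).cm (hv.h3 1)) ((hu.h3 1).cm (hv.h3 1)))
      hN hY hX (by norm_num) (by norm_num) (by norm_num))
  · exact key _ _ _ _ (Hg_gen 1 1 ((hu.h1 1).cm (hu.h1 1)) (zz _ fun P => by simp [z1])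
      (zz _ fun P => by simp [z1])
      hN hY hX (by norm_num) (by norm_num) (by norm_num))
  · exact key _ _ _ _ (Hg_gen 2 2 (zz _ fun P => by simp [z2]) ((hv.h2 1).cm (hv.h2 1))
      (zz _ fun P => by simp [z2])
      hN hY hX (by norm_num) (by norm_num) (by norm_num))
  · exact key _ _ _ _ (Hg_gen 1 0 ((hu.h1 1).cm (hu.h0 1)) (zz _ fun P => by simp [z1])
      (((hu.h1 1).cm (hv.h0 1)).congr fun P _ => by simp [z1])
      hN hY hX (by norm_num) (by norm_num) (by norm_num))
  · exact key _ _ _ _ (Hg_gen 1 3 ((hu.h1 1).cm (hu.h3 1)) (zz _ fun P => by simp [z1])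
      (((hu.h1 1).cm (hv.h3 1)).congr fun P _ => by simp [z1])
      hN hY hX (by norm_num) (by norm_num) (by norm_num))

lemma HH_minus (ha : |a| < 1) {Φ : Pt → ℂ} (hΦ : MM R 2 3 (-1) qpsi Φ) :
    HH R (hCCK a (-2) Φ) := by
  have q1 : Antitone (fun i => qpsi i - 1) := fun i j h => by
    have := qpsi_anti h
    simp only; omega
  have q2 : Antitone (fun i => qpsi (i + 1)) := fun i j h => qpsi_anti (by omega)
  have i1 := opV (cc := fun q => 4 * betNP a q + 3 * tauNP a q) (VV_m (a := a))
    (fun k => MM.add ((Cbet (a := a)).cmul 4) ((Ctau (a := a)).cmul 3)) hΦ qpsi_anti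
  have i2 := opU (cc := fun q => 3 * rhoC a q) (VU_l ha) (fun k => (Cf.rho (a := a)).cmul 3) hΦ qpsi_anti
  have hN := opV (cc := fun q => conj (alpNP a q) + 3 * betNP a q - tauNP a q) (VV_m (a := a))
    (fun k => MM.sub (MM.add (MM.conj (Calp (a := a))) ((Cbet (a := a)).cmul 3)) (Ctau (a := a))) i1 q1
  have hY := opU (cc := fun q => -(rhoC a q)) (VU_l ha) (fun k => (Cf.rho (a := a)).neg) i2 q2
  have hX1 := opV (cc := fun q => -2 * conj (alpNP a q) + 2 * betNP a q - tauNP a q)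
    (VV_m (a := a))
    (fun k => MM.sub (MM.add (MM.cmul (-2) (MM.conj (Calp (a := a)))) ((Cbet (a := a)).cmul 2)) (Ctau (a := a))) i2 q2
  have hX2 := opU (cc := fun q => conj (rhoC a q) - rhoC a q) (VU_l ha)
    (fun k => MM.sub (MM.conj (Cf.rho (a := a))) (Cf.rho (a := a))) i1 q1
  refine HH_of ((VU_n (a := a)).low ha) ((VV_mb (a := a)).low (a := a))
    (hN.toq (by norm_num) (by norm_num [qpsi]) (by norm_num [qpsi]))
    (hY.toq (by norm_num) (by norm_num [qpsi]) (by norm_num [qpsi]))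
    (MM.add (hX1.toq (by norm_num) (by norm_num [qpsi]) (by norm_num [qpsi]))
      (hX2.toq (by norm_num) (by norm_num [qpsi]) (by norm_num [qpsi]))) fun P i j => ?_
  rfl

lemma HH_plus (ha : |a| < 1) {Φ : Pt → ℂ} (hΦ : MM R 2 3 (-5) qpsi Φ) :
    HH R (hCCK a 2 Φ) := by
  have q1 : Antitone (fun i => qpsi i - 1) := fun i j h => by
    have := qpsi_anti h
    simp only; omega
  have q2 : Antitone (fun i => qpsi (i + 1)) := fun i j h => qpsi_anti (by omega)
  have i1 := opV (cc := fun q => -4 * alpNP a q + piNP a q) (VV_mb (a := a))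
    (fun k => MM.add ((Calp (a := a)).cmul (-4)) (Cpi (a := a))) hΦ qpsi_anti
  have i2 := opU (cc := fun q => muNP a q - 4 * gamNP a q) (VU_n (a := a))
    (fun k => MM.sub (Cmu (a := a)) ((Cgam (a := a)).cmul 4)) hΦ qpsi_anti
  have hN := opV (cc := fun q => -3 * alpNP a q - conj (betNP a q) + 5 * piNP a q)
    (VV_mb (a := a))
    (fun k => MM.add (MM.sub ((Calp (a := a)).cmul (-3)) (MM.conj (Cbet (a := a)))) ((Cpi (a := a)).cmul 5)) i1 q1
  have hY := opU (cc := fun q => 5 * muNP a q - 3 * gamNP a q + conj (gamNP a q))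
    (VU_n (a := a))
    (fun k => MM.add (MM.sub ((Cmu (a := a)).cmul 5) ((Cgam (a := a)).cmul 3)) (MM.conj (Cgam (a := a)))) i2 q2
  have hX1 := opV
    (cc := fun q => -3 * alpNP a q + conj (betNP a q) + 5 * piNP a q + conj (tauNP a q))
    (VV_mb (a := a))
    (fun k => MM.add (MM.add (MM.add ((Calp (a := a)).cmul (-3)) (MM.conj (Cbet (a := a)))) ((Cpi (a := a)).cmul 5))
      (MM.conj (Ctau (a := a)))) i2 q2
  have hX2 := opU
    (cc := fun q => 5 * muNP a q - conj (muNP a q) - 3 * gamNP a q - conj (gamNP a q))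
    (VU_n (a := a))
    (fun k => MM.sub (MM.sub (MM.sub ((Cmu (a := a)).cmul 5) (MM.conj (Cmu (a := a)))) ((Cgam (a := a)).cmul 3))
      (MM.conj (Cgam (a := a)))) i1 q1
  have hr : Cf R 2 1 4 0 (fun P => rhoC a P ^ (-4 : ℤ)) := Cf.rhoinv4
  refine HH_of ((VU_l ha).low ha) ((VV_m (a := a)).low (a := a))
    (hr.mq (hN.toq (x := 0) (y := 0) le_rfl (by norm_num [qpsi]) (by norm_num [qpsi])) le_rfl
      (by norm_num) (by norm_num) (by norm_num))
    (hr.mq (hY.toq (x := 0) (y := 0) le_rfl (by norm_num [qpsi]) (by norm_num [qpsi])) le_rfl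
      (by norm_num) (by norm_num) (by norm_num))
    (hr.mq (MM.add (hX1.toq (x := 1) (y := -1) le_rfl (by norm_num [qpsi]) (by norm_num [qpsi]))
      (hX2.toq le_rfl (by norm_num [qpsi]) (by norm_num [qpsi]))) (by norm_num)
      (by norm_num) (by norm_num) (by norm_num)) fun P i j => ?_
  have : Hop a 2 Φ P i j = Hplus a Φ P i j := by simp [Hop]
  simp only [hCCK, Matrix.of_apply, this]
  rw [show ∀ A B : ℂ, A = B → (A + conj A).re = (B + conj B).re from fun A B h => by rw [h]]
  unfold Hplus Hg Kerr.low lco mco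
  ring

end tetrad

section adform

set_option linter.unusedSectionVars false
set_option linter.unusedSimpArgs false

variable {R a : ℝ} {P : Pt} [Fact (4 ≤ R)]

lemma Bd.mm {p p' p'' e e' e'' : ℤ} {f f' : Pt → ℝ} (hf : Bd R p e f) (hg : Bd R p' e' f')
    (hp : p + p' ≤ p'') (he : e'' ≤ e + e') : Bd R p'' e'' (fun P => f P * f' P) :=
  (hf.mul hg).mono hp he

lemma MM.dr {p : ℤ} {q : ℕ → ℤ} {f : Pt → ℝ} (h : MM R 2 1 p q f) :
    Bd R (p - 1) (q 1) (fun P => pd 1 f P) := h.2.2.1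
lemma MM.dz {p : ℤ} {q : ℕ → ℤ} {f : Pt → ℝ} (h : MM R 2 1 p q f) :
    Bd R p (q 0 - 2) (fun P => pd 2 f P) := h.2.2.2

/-- Closed form of the Christoffel symbols on the exterior. -/
lemma Chr_low (ha : |a| < 1) (hP : P ∈ Om R) :
    Chr a 0 1 0 P = 1 / 2 * (gInv a P 0 0 * pd 1 (fun q => g a q 0 0) P
      + gInv a P 0 3 * pd 1 (fun q => g a q 0 3) P) ∧
    Chr a 0 1 3 P = 1 / 2 * (gInv a P 0 0 * pd 1 (fun q => g a q 0 3) P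
      + gInv a P 0 3 * pd 1 (fun q => g a q 3 3) P) ∧
    Chr a 3 1 0 P = 1 / 2 * (gInv a P 3 0 * pd 1 (fun q => g a q 0 0) P
      + gInv a P 3 3 * pd 1 (fun q => g a q 0 3) P) ∧
    Chr a 3 1 3 P = 1 / 2 * (gInv a P 3 0 * pd 1 (fun q => g a q 0 3) P
      + gInv a P 3 3 * pd 1 (fun q => g a q 3 3) P) := by
  obtain ⟨z1, z2, z3, z4, z5, z6, z7, z8, z9, z10⟩ := gInv_zeros (R := R) ha hP
  refine ⟨?_, ?_, ?_, ?_⟩ <;>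
  · simp only [Chr, Fin.sum_univ_four, z1, z2, z3, z4, z5, z6, z7, z8, z9, z10, pd0_g ha hP,
      pd3_g ha hP, g30_fun, g01_eq, g02_eq, g10_eq, g12_eq, g13_eq, g20_eq, g21_eq, g23_eq,
      g31_eq, g32_eq, pd_const']
    ring

lemma Chr_up (ha : |a| < 1) (hP : P ∈ Om R) :
    Chr a 1 0 0 P = 1 / 2 * (gInv a P 1 1 * -pd 1 (fun q => g a q 0 0) P) ∧
    Chr a 1 0 3 P = 1 / 2 * (gInv a P 1 1 * -pd 1 (fun q => g a q 0 3) P) ∧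
    Chr a 1 3 3 P = 1 / 2 * (gInv a P 1 1 * -pd 1 (fun q => g a q 3 3) P) ∧
    Chr a 2 0 0 P = 1 / 2 * (gInv a P 2 2 * -pd 2 (fun q => g a q 0 0) P) ∧
    Chr a 2 0 3 P = 1 / 2 * (gInv a P 2 2 * -pd 2 (fun q => g a q 0 3) P) ∧
    Chr a 2 3 3 P = 1 / 2 * (gInv a P 2 2 * -pd 2 (fun q => g a q 3 3) P) ∧
    Chr a 1 1 1 P = 1 / 2 * (gInv a P 1 1 * pd 1 (fun q => g a q 1 1) P) ∧
    Chr a 1 1 2 P = 1 / 2 * (gInv a P 1 1 * pd 2 (fun q => g a q 1 1) P) ∧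
    Chr a 1 2 2 P = 1 / 2 * (gInv a P 1 1 * -pd 1 (fun q => g a q 2 2) P) ∧
    Chr a 2 1 1 P = 1 / 2 * (gInv a P 2 2 * -pd 2 (fun q => g a q 1 1) P) ∧
    Chr a 2 1 2 P = 1 / 2 * (gInv a P 2 2 * pd 1 (fun q => g a q 2 2) P) ∧
    Chr a 2 2 2 P = 1 / 2 * (gInv a P 2 2 * pd 2 (fun q => g a q 2 2) P) := by
  obtain ⟨z1, z2, z3, z4, z5, z6, z7, z8, z9, z10⟩ := gInv_zeros (R := R) ha hP
  refine ⟨?_, ?_, ?_, ?_, ?_, ?_, ?_, ?_, ?_, ?_, ?_, ?_⟩ <;>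
  · simp only [Chr, Fin.sum_univ_four, z1, z2, z3, z4, z5, z6, z7, z8, z9, z10, pd0_g ha hP,
      pd3_g ha hP, g30_fun, g01_eq, g02_eq, g10_eq, g12_eq, g13_eq, g20_eq, g21_eq, g23_eq,
      g31_eq, g32_eq, pd_const']
    ring

/-- Growth of the Christoffel symbols. -/
structure ChB (R a : ℝ) : Prop where
  c010 : Bd R (-1) 0 (Chr a 0 1 0)
  c013 : Bd R (-2) 2 (Chr a 0 1 3)
  c310 : Bd R (-4) 0 (Chr a 3 1 0)
  c313 : Bd R (-1) 0 (Chr a 3 1 3)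
  c100 : Bd R (-1) 0 (Chr a 1 0 0)
  c103 : Bd R (-2) 2 (Chr a 1 0 3)
  c133 : Bd R 1 2 (Chr a 1 3 3)
  c200 : Bd R (-2) 0 (Chr a 2 0 0)
  c203 : Bd R (-3) 2 (Chr a 2 0 3)
  c233 : Bd R 0 2 (Chr a 2 3 3)
  c111 : Bd R (-1) 0 (Chr a 1 1 1)
  c112 : Bd R 0 (-2) (Chr a 1 1 2)
  c122 : Bd R 1 (-2) (Chr a 1 2 2)
  c211 : Bd R (-2) 0 (Chr a 2 1 1)
  c212 : Bd R (-1) 0 (Chr a 2 1 2)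
  c222 : Bd R 0 (-2) (Chr a 2 2 2)

lemma chB (ha : |a| < 1) : ChB R a := by
  have g00 : Cf R 2 1 _ _ _ := Cg00 (a := a)
  have g03 : Cf R 2 1 _ _ _ := Cg03 (a := a)
  have g33 : Cf R 2 1 _ _ _ := Cg33 (a := a)
  have g11 : Cf R 2 1 _ _ _ := Cg11 ha
  have g22 : Cf R 2 1 _ _ _ := Cg22 (a := a)
  have i00 := (Ci00 (R := R) (k := 1) ha).bd
  have i03 := (Ci03 (R := R) (k := 1) ha).bd
  have i30 := (Ci30 (R := R) (k := 1) ha).bd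
  have i33 := (Ci33 (R := R) (k := 1) ha).bd
  have i11 := (Ci11 (R := R) (k := 1) ha).bd
  have i22 := (Ci22 (R := R) (k := 1) ha).bd
  constructor
  · refine Bd.congr (Bd.cmul (1 / 2) (Bd.add (i00.mm g00.dr ?_ ?_) (i03.mm g03.dr ?_ ?_)))
      fun P hP => (Chr_low ha hP).1 <;> norm_num
  · refine Bd.congr (Bd.cmul (1 / 2) (Bd.add (i00.mm g03.dr ?_ ?_) (i03.mm g33.dr ?_ ?_)))
      fun P hP => (Chr_low ha hP).2.1 <;> norm_num
  · refine Bd.congr (Bd.cmul (1 / 2) (Bd.add (i30.mm g00.dr ?_ ?_) (i33.mm g03.dr ?_ ?_)))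
      fun P hP => (Chr_low ha hP).2.2.1 <;> norm_num
  · refine Bd.congr (Bd.cmul (1 / 2) (Bd.add (i30.mm g03.dr ?_ ?_) (i33.mm g33.dr ?_ ?_)))
      fun P hP => (Chr_low ha hP).2.2.2 <;> norm_num
  · refine Bd.congr (Bd.cmul (1 / 2) (i11.mm g00.dr.neg ?_ ?_))
      fun P hP => (Chr_up ha hP).1 <;> norm_num
  · refine Bd.congr (Bd.cmul (1 / 2) (i11.mm g03.dr.neg ?_ ?_))
      fun P hP => (Chr_up ha hP).2.1 <;> norm_num
  · refine Bd.congr (Bd.cmul (1 / 2) (i11.mm g33.dr.neg ?_ ?_))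
      fun P hP => (Chr_up ha hP).2.2.1 <;> norm_num
  · refine Bd.congr (Bd.cmul (1 / 2) (i22.mm g00.dz.neg ?_ ?_))
      fun P hP => (Chr_up ha hP).2.2.2.1 <;> norm_num
  · refine Bd.congr (Bd.cmul (1 / 2) (i22.mm g03.dz.neg ?_ ?_))
      fun P hP => (Chr_up ha hP).2.2.2.2.1 <;> norm_num
  · refine Bd.congr (Bd.cmul (1 / 2) (i22.mm g33.dz.neg ?_ ?_))
      fun P hP => (Chr_up ha hP).2.2.2.2.2.1 <;> norm_num
  · refine Bd.congr (Bd.cmul (1 / 2) (i11.mm g11.dr ?_ ?_))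
      fun P hP => (Chr_up ha hP).2.2.2.2.2.2.1 <;> norm_num
  · refine Bd.congr (Bd.cmul (1 / 2) (i11.mm g11.dz ?_ ?_))
      fun P hP => (Chr_up ha hP).2.2.2.2.2.2.2.1 <;> norm_num
  · refine Bd.congr (Bd.cmul (1 / 2) (i11.mm g22.dr.neg ?_ ?_))
      fun P hP => (Chr_up ha hP).2.2.2.2.2.2.2.2.1 <;> norm_num
  · refine Bd.congr (Bd.cmul (1 / 2) (i22.mm g11.dz.neg ?_ ?_))
      fun P hP => (Chr_up ha hP).2.2.2.2.2.2.2.2.2.1 <;> norm_num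
  · refine Bd.congr (Bd.cmul (1 / 2) (i22.mm g22.dr ?_ ?_))
      fun P hP => (Chr_up ha hP).2.2.2.2.2.2.2.2.2.2.1 <;> norm_num
  · refine Bd.congr (Bd.cmul (1 / 2) (i22.mm g22.dz ?_ ?_))
      fun P hP => (Chr_up ha hP).2.2.2.2.2.2.2.2.2.2.2 <;> norm_num

/-- Trace reversal preserves the growth class. -/
lemma HH.trRev (ha : |a| < 1) {h : Pt → Matrix (Fin 4) (Fin 4) ℝ} (hh : HH R h) :
    HH R (trRev a h) := by
  have hT : MM R 2 1 (-3) (qq 0 0)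
      (fun P => ∑ l : Fin 4, ∑ s : Fin 4, gInv a P l s * h P l s) := by
    refine MM.congr (MM.add (MM.add (MM.add (MM.add (MM.add
      ((Ci00 ha).mq hh.h00 le_rfl ?_ ?_ ?_)
      ((Ci03 ha).mq hh.h03 (by norm_num) ?_ ?_ ?_))
      ((Ci30 ha).mq hh.h30 (by norm_num) ?_ ?_ ?_))
      ((Ci33 ha).mq hh.h33 le_rfl ?_ ?_ ?_))
      ((Ci11 ha).mq hh.h11 le_rfl ?_ ?_ ?_))
      ((Ci22 ha).mq hh.h22 le_rfl ?_ ?_ ?_)) fun P hP => ?_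
    rotate_right
    · obtain ⟨z1, z2, z3, z4, z5, z6, z7, z8, z9, z10⟩ := gInv_zeros (R := R) ha hP
      simp only [Fin.sum_univ_four, z1, z2, z3, z4, z5, z6, z7, z8, z9, z10]
      ring
    all_goals norm_num
  have gen : ∀ (i j : Fin 4) (p x y pg eg : ℤ), MM R 2 1 p (qq x y) (fun P => h P i j) →
      Cf R 2 1 pg eg (fun P => g a P i j) → pg - 3 ≤ p → x ≤ eg → y ≤ eg →
      MM R 2 1 p (qq x y) (fun P => Kerr.trRev a h P i j) := by
    intro i j p x y pg eg h1 h2 hp hx hy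
    refine MM.congr (MM.sub h1 ((h2.mq hT le_rfl (p'' := p) (x' := x) (y' := y) (by linarith)
      (by linarith) (by linarith)).cmul (1 / 2))) fun P hP => ?_
    simp only [Kerr.trRev, Matrix.of_apply]
    ring
  have zz : ∀ i j : Fin 4, (∀ P, g a P i j = 0) → Cf R 2 1 (-10) 10 (fun P => g a P i j) :=
    fun i j hf => MM.zero.congr fun P _ => hf P
  have h30 : Cf R 2 1 (-1) 2 (fun P => g a P 3 0) := by simp only [g30_eq]; exact Cg03
  constructor
  · exact gen _ _ _ _ _ _ _ hh.h00 Cg00 (by norm_num) (by norm_num) (by norm_num)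
  · exact gen _ _ _ _ _ _ _ hh.h03 Cg03 (by norm_num) (by norm_num) (by norm_num)
  · exact gen _ _ _ _ _ _ _ hh.h30 h30 (by norm_num) (by norm_num) (by norm_num)
  · exact gen _ _ _ _ _ _ _ hh.h33 Cg33 (by norm_num) (by norm_num) (by norm_num)
  · exact gen _ _ _ _ _ _ _ hh.h11 (Cg11 ha) (by norm_num) (by norm_num) (by norm_num)
  · exact gen _ _ _ _ _ _ _ hh.h12 (zz _ _ g12_eq) (by norm_num) (by norm_num) (by norm_num)
  · exact gen _ _ _ _ _ _ _ hh.h21 (zz _ _ g21_eq) (by norm_num) (by norm_num) (by norm_num)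
  · exact gen _ _ _ _ _ _ _ hh.h22 Cg22 (by norm_num) (by norm_num) (by norm_num)
  · exact gen _ _ _ _ _ _ _ hh.h10 (zz _ _ g10_eq) (by norm_num) (by norm_num) (by norm_num)
  · exact gen _ _ _ _ _ _ _ hh.h13 (zz _ _ g13_eq) (by norm_num) (by norm_num) (by norm_num)

end adform

section adform2

set_option linter.unusedSectionVars false
set_option linter.unusedSimpArgs false

variable {R a : ℝ} {P : Pt} [Fact (4 ≤ R)] {h : Pt → Matrix (Fin 4) (Fin 4) ℝ}

/-- `∇_1 h_{bl}` for `b, l ∈ {0,3}`. -/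
lemma covD_1bl (ha : |a| < 1) (hP : P ∈ Om R) {b l : Fin 4} (hb : b = 0 ∨ b = 3)
    (hl : l = 0 ∨ l = 3) :
    covD2 a h 1 b l P = pd 1 (fun q => h q b l) P
      - (Chr a 0 1 b P * h P 0 l + Chr a 3 1 b P * h P 3 l)
      - (Chr a 0 1 l P * h P b 0 + Chr a 3 1 l P * h P b 3) := by
  obtain ⟨z1, -, -⟩ := Chr_zeros (R := R) ha hP
  have e1 := z1 1 (by simp) b (by simpa using hb)
  have e2 := z1 2 (by simp) b (by simpa using hb)
  have e3 := z1 1 (by simp) l (by simpa using hl)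
  have e4 := z1 2 (by simp) l (by simpa using hl)
  simp only [covD2, Fin.sum_univ_four, e1.1, e2.1, e3.1, e4.1]
  ring

/-- `∇_b h_{1l}` for `b, l ∈ {0,3}`. -/
lemma covD_b1l (ha : |a| < 1) (hP : P ∈ Om R) (hh : HH R h) {b l : Fin 4} (hb : b = 0 ∨ b = 3)
    (hl : l = 0 ∨ l = 3) :
    covD2 a h b 1 l P =
      - (Chr a 0 1 b P * h P 0 l + Chr a 3 1 b P * h P 3 l)
      - (Chr a 1 b l P * h P 1 1 + Chr a 2 b l P * h P 1 2) := by
  obtain ⟨z1, -, z3⟩ := Chr_zeros (R := R) ha hP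
  have e1 := z1 1 (by simp) b (by simpa using hb)
  have e2 := z1 2 (by simp) b (by simpa using hb)
  have e3 := z3 0 (by simp) b (by simpa using hb) l (by simpa using hl)
  have e4 := z3 3 (by simp) b (by simpa using hb) l (by simpa using hl)
  have e5 : pd b (fun q => h q 1 l) P = 0 := by
    rcases hb with rfl | rfl <;> rcases hl with rfl | rfl
    · exact (hh.h10.2.1 P hP).2.1
    · exact (hh.h13.2.1 P hP).2.1
    · exact (hh.h10.2.1 P hP).2.2
    · exact (hh.h13.2.1 P hP).2.2
  simp only [covD2, Fin.sum_univ_four, e1.1, e2.1, e3, e4, e5, Chr_symm _ b 1]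
  ring

lemma covD_111 (ha : |a| < 1) (hP : P ∈ Om R) :
    covD2 a h 1 1 1 P = pd 1 (fun q => h q 1 1) P
      - (Chr a 1 1 1 P * h P 1 1 + Chr a 2 1 1 P * h P 2 1)
      - (Chr a 1 1 1 P * h P 1 1 + Chr a 2 1 1 P * h P 1 2) := by
  obtain ⟨-, z2, -⟩ := Chr_zeros (R := R) ha hP
  simp only [covD2, Fin.sum_univ_four, (z2 0 (by simp)).1, (z2 3 (by simp)).1]
  ring

lemma covD_212 (ha : |a| < 1) (hP : P ∈ Om R) :
    covD2 a h 2 1 2 P = pd 2 (fun q => h q 1 2) P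
      - (Chr a 1 1 2 P * h P 1 2 + Chr a 2 1 2 P * h P 2 2)
      - (Chr a 1 2 2 P * h P 1 1 + Chr a 2 2 2 P * h P 1 2) := by
  obtain ⟨-, z2, -⟩ := Chr_zeros (R := R) ha hP
  simp only [covD2, Fin.sum_univ_four, Chr_symm _ 2 1, (z2 0 (by simp)).2.1, (z2 3 (by simp)).2.1,
    (z2 0 (by simp)).2.2.2, (z2 3 (by simp)).2.2.2]
  ring

/-- Bounds on the needed covariant derivatives. -/
structure DB (R a : ℝ) (h : Pt → Matrix (Fin 4) (Fin 4) ℝ) : Prop where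
  d100 : Bd R (-3) 0 (covD2 a h 1 0 0)
  d103 : Bd R (-3) 0 (covD2 a h 1 0 3)
  d130 : Bd R (-3) 0 (covD2 a h 1 3 0)
  d133 : Bd R (-2) 0 (covD2 a h 1 3 3)
  d010 : Bd R (-4) 0 (covD2 a h 0 1 0)
  d013 : Bd R (-3) 0 (covD2 a h 0 1 3)
  d310 : Bd R (-3) 0 (covD2 a h 3 1 0)
  d313 : Bd R (-2) 2 (covD2 a h 3 1 3)
  d111 : Bd R (-4) 0 (covD2 a h 1 1 1)
  d212 : Bd R (-2) (-2) (covD2 a h 2 1 2)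

lemma HH.db (ha : |a| < 1) (hh : HH R h) : DB R a h := by
  have c := chB (R := R) ha
  have h00 := hh.h00.bd
  have h03 := hh.h03.bd
  have h30 := hh.h30.bd
  have h33 := hh.h33.bd
  have h11 := hh.h11.bd
  have h12 := hh.h12.bd
  have h21 := hh.h21.bd
  have h22 := hh.h22.bd
  have e130 : Bd R (-2) 2 (Chr a 1 3 0) := c.c103.congr fun P _ => Chr_symm _ _ _ _
  have e230 : Bd R (-3) 2 (Chr a 2 3 0) := c.c203.congr fun P _ => Chr_symm _ _ _ _
  constructor
  · refine Bd.congr (Bd.sub (Bd.sub (hh.h00.dr.mono ?_ ?_)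
      (Bd.add (c.c010.mm h00 ?_ ?_) (c.c310.mm h30 ?_ ?_)))
      (Bd.add (c.c010.mm h00 ?_ ?_) (c.c310.mm h03 ?_ ?_)))
      fun P hP => covD_1bl ha hP (.inl rfl) (.inl rfl) <;> norm_num [qq]
  · refine Bd.congr (Bd.sub (Bd.sub (hh.h03.dr.mono ?_ ?_)
      (Bd.add (c.c010.mm h03 ?_ ?_) (c.c310.mm h33 ?_ ?_)))
      (Bd.add (c.c013.mm h00 ?_ ?_) (c.c313.mm h03 ?_ ?_)))
      fun P hP => covD_1bl ha hP (.inl rfl) (.inr rfl) <;> norm_num [qq]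
  · refine Bd.congr (Bd.sub (Bd.sub (hh.h30.dr.mono ?_ ?_)
      (Bd.add (c.c013.mm h00 ?_ ?_) (c.c313.mm h30 ?_ ?_)))
      (Bd.add (c.c010.mm h30 ?_ ?_) (c.c310.mm h33 ?_ ?_)))
      fun P hP => covD_1bl ha hP (.inr rfl) (.inl rfl) <;> norm_num [qq]
  · refine Bd.congr (Bd.sub (Bd.sub (hh.h33.dr.mono ?_ ?_)
      (Bd.add (c.c013.mm h03 ?_ ?_) (c.c313.mm h33 ?_ ?_)))
      (Bd.add (c.c013.mm h30 ?_ ?_) (c.c313.mm h33 ?_ ?_)))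
      fun P hP => covD_1bl ha hP (.inr rfl) (.inr rfl) <;> norm_num [qq]
  · refine Bd.congr (Bd.sub
      (Bd.neg (Bd.add (c.c010.mm h00 ?_ ?_) (c.c310.mm h30 ?_ ?_)))
      (Bd.add (c.c100.mm h11 ?_ ?_) (c.c200.mm h12 ?_ ?_)))
      fun P hP => covD_b1l ha hP hh (.inl rfl) (.inl rfl) <;> norm_num [qq]
  · refine Bd.congr (Bd.sub
      (Bd.neg (Bd.add (c.c010.mm h03 ?_ ?_) (c.c310.mm h33 ?_ ?_)))
      (Bd.add (c.c103.mm h11 ?_ ?_) (c.c203.mm h12 ?_ ?_)))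
      fun P hP => covD_b1l ha hP hh (.inl rfl) (.inr rfl) <;> norm_num [qq]
  · refine Bd.congr (Bd.sub
      (Bd.neg (Bd.add (c.c013.mm h00 ?_ ?_) (c.c313.mm h30 ?_ ?_)))
      (Bd.add (e130.mm h11 ?_ ?_) (e230.mm h12 ?_ ?_)))
      fun P hP => covD_b1l ha hP hh (.inr rfl) (.inl rfl) <;> norm_num [qq]
  · refine Bd.congr (Bd.sub
      (Bd.neg (Bd.add (c.c013.mm h03 ?_ ?_) (c.c313.mm h33 ?_ ?_)))
      (Bd.add (c.c133.mm h11 ?_ ?_) (c.c233.mm h12 ?_ ?_)))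
      fun P hP => covD_b1l ha hP hh (.inr rfl) (.inr rfl) <;> norm_num [qq]
  · refine Bd.congr (Bd.sub (Bd.sub (hh.h11.dr.mono ?_ ?_)
      (Bd.add (c.c111.mm h11 ?_ ?_) (c.c211.mm h21 ?_ ?_)))
      (Bd.add (c.c111.mm h11 ?_ ?_) (c.c211.mm h12 ?_ ?_)))
      fun P hP => covD_111 ha hP <;> norm_num [qq]
  · refine Bd.congr (Bd.sub (Bd.sub (hh.h12.dz.mono ?_ ?_)
      (Bd.add (c.c112.mm h12 ?_ ?_) (c.c212.mm h22 ?_ ?_)))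
      (Bd.add (c.c122.mm h11 ?_ ?_) (c.c222.mm h12 ?_ ?_)))
      fun P hP => covD_212 ha hP <;> norm_num [qq]

/-- The divergence `∇^λ h_{1λ}`. -/
lemma HH.div (ha : |a| < 1) (hh : HH R h) :
    Bd R (-4) 0 (fun P => ∑ l : Fin 4, ∑ s : Fin 4, gInv a P l s * covD2 a h s 1 l P) := by
  have d := hh.db ha
  have i00 := (Ci00 (R := R) (k := 1) ha).bd
  have i03 := (Ci03 (R := R) (k := 1) ha).bd
  have i30 := (Ci30 (R := R) (k := 1) ha).bd
  have i33 := (Ci33 (R := R) (k := 1) ha).bd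
  have i11 := (Ci11 (R := R) (k := 1) ha).bd
  have i22 := (Ci22 (R := R) (k := 1) ha).bd
  refine Bd.congr (Bd.add (Bd.add (Bd.add (Bd.add (Bd.add (i00.mm d.d010 ?_ ?_)
    (i03.mm d.d310 ?_ ?_)) (i30.mm d.d013 ?_ ?_)) (i33.mm d.d313 ?_ ?_)) (i11.mm d.d111 ?_ ?_))
    (i22.mm d.d212 ?_ ?_)) fun P hP => ?_
  rotate_right
  · obtain ⟨z1, z2, z3, z4, z5, z6, z7, z8, z9, z10⟩ := gInv_zeros (R := R) ha hP
    simp only [Fin.sum_univ_four, z1, z2, z3, z4, z5, z6, z7, z8, z9, z10]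
    ring
  all_goals norm_num

lemma covDk_up (x y : ℝ) {l b : Fin 4} :
    covDk a x y b l P = Chr a l b 0 P * x + Chr a l b 3 P * y := by
  simp [covDk, pd_const', Fin.sum_univ_four, kvec]

/-- The components `F_{1b}`. -/
lemma ADform_1b (ha : |a| < 1) (hP : P ∈ Om R) (x y : ℝ) {b : Fin 4} (hb : b = 0 ∨ b = 3) :
    ADform a h x y 1 b P = 1 / (8 * Real.pi) * (1 / 2 *
      ((x * (covD2 a (trRev a h) 1 b 0 P - covD2 a (trRev a h) b 1 0 P)
        + y * (covD2 a (trRev a h) 1 b 3 P - covD2 a (trRev a h) b 1 3 P))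
      + (x * (Chr a 1 b 0 P * trRev a h P 1 1 + Chr a 2 b 0 P * trRev a h P 2 1)
        + y * (Chr a 1 b 3 P * trRev a h P 1 1 + Chr a 2 b 3 P * trRev a h P 2 1))
      - (x * (Chr a 0 1 0 P * trRev a h P 0 b + Chr a 3 1 0 P * trRev a h P 3 b)
        + y * (Chr a 0 1 3 P * trRev a h P 0 b + Chr a 3 1 3 P * trRev a h P 3 b))
      + (x * g a P b 0 + y * g a P b 3) *
        ∑ l : Fin 4, ∑ s : Fin 4, gInv a P l s * covD2 a (trRev a h) s 1 l P)) := by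
  obtain ⟨z1, z2, z3⟩ := Chr_zeros (R := R) ha hP
  have e1 : kco a x y P 1 = 0 := by
    simp [kco, Fin.sum_univ_four, g10_eq, g12_eq, g13_eq, kvec]
  have e2 : kco a x y P b = x * g a P b 0 + y * g a P b 3 := by
    simp [kco, Fin.sum_univ_four, kvec]; ring
  have hb' : b ∈ ({0, 3} : Finset (Fin 4)) := by simpa using hb
  have a1 := z3 0 (by simp) b hb' 0 (by simp)
  have a2 := z3 0 (by simp) b hb' 3 (by simp)
  have a3 := z3 3 (by simp) b hb' 0 (by simp)
  have a4 := z3 3 (by simp) b hb' 3 (by simp)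
  have b1 := (z1 1 (by simp) 0 (by simp)).1
  have b2 := (z1 1 (by simp) 3 (by simp)).1
  have b3 := (z1 2 (by simp) 0 (by simp)).1
  have b4 := (z1 2 (by simp) 3 (by simp)).1
  have e3 : (∑ l : Fin 4, (trRev a h P l 1 * covDk a x y b l P
        - trRev a h P l b * covDk a x y 1 l P)) =
      (x * (Chr a 1 b 0 P * trRev a h P 1 1 + Chr a 2 b 0 P * trRev a h P 2 1)
        + y * (Chr a 1 b 3 P * trRev a h P 1 1 + Chr a 2 b 3 P * trRev a h P 2 1))
      - (x * (Chr a 0 1 0 P * trRev a h P 0 b + Chr a 3 1 0 P * trRev a h P 3 b)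
        + y * (Chr a 0 1 3 P * trRev a h P 0 b + Chr a 3 1 3 P * trRev a h P 3 b)) := by
    simp only [Fin.sum_univ_four, covDk_up, a1, a2, a3, a4, b1, b2, b3, b4]
    ring
  have e4 : (∑ l : Fin 4, kvec x y l *
        (covD2 a (trRev a h) 1 b l P - covD2 a (trRev a h) b 1 l P)) =
      (x * (covD2 a (trRev a h) 1 b 0 P - covD2 a (trRev a h) b 1 0 P)
        + y * (covD2 a (trRev a h) 1 b 3 P - covD2 a (trRev a h) b 1 3 P)) := by
    simp [Fin.sum_univ_four, kvec]
  unfold ADform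
  rw [e1, e2, e3, e4]
  ring

lemma HH.F10 (ha : |a| < 1) (hh : HH R h) (x y : ℝ) :
    Bd R (-3) 0 (fun P => ADform a h x y 1 0 P) := by
  have ht := hh.trRev ha
  have d := ht.db ha
  have dv := ht.div ha
  have c := chB (R := R) ha
  have g00 : Bd R 0 0 (fun P => g a P 0 0) := (Cg00 (k := 0)).bd
  have g03 : Bd R (-1) 2 (fun P => g a P 0 3) := (Cg03 (k := 0)).bd
  refine Bd.congr (Bd.cmul _ (Bd.cmul _ (Bd.add (Bd.sub (Bd.add (Bd.add
    (Bd.cmul _ (Bd.sub d.d100 (d.d010.mono ?_ ?_))) (Bd.cmul _ (Bd.sub d.d103 d.d013)))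
    (Bd.add (Bd.cmul _ (Bd.add (c.c100.mm ht.h11.bd ?_ ?_) (c.c200.mm ht.h21.bd ?_ ?_)))
     (Bd.cmul _ (Bd.add (c.c103.mm ht.h11.bd ?_ ?_) (c.c203.mm ht.h21.bd ?_ ?_)))))
    (Bd.add (Bd.cmul _ (Bd.add (c.c010.mm ht.h00.bd ?_ ?_) (c.c310.mm ht.h30.bd ?_ ?_)))
     (Bd.cmul _ (Bd.add (c.c013.mm ht.h00.bd ?_ ?_) (c.c313.mm ht.h30.bd ?_ ?_)))))
    (Bd.mm (p := 0) (e := 0) (Bd.add (Bd.cmul _ g00) ((Bd.cmul _ g03).mono ?_ ?_)) dv ?_ ?_))))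
    fun P hP => ADform_1b ha hP x y (.inl rfl) <;> norm_num [qq]

lemma HH.F13 (ha : |a| < 1) (hh : HH R h) (x y : ℝ) :
    Bd R 0 0 (fun P => ADform a h x y 1 3 P) := by
  have ht := hh.trRev ha
  have d := ht.db ha
  have dv := ht.div ha
  have c := chB (R := R) ha
  have g30 : Bd R (-1) 2 (fun P => g a P 3 0) := by
    simp only [g30_eq]; exact (Cg03 (k := 0)).bd
  have g33 : Bd R 2 2 (fun P => g a P 3 3) := (Cg33 (k := 0)).bd
  have e130 : Bd R (-2) 2 (Chr a 1 3 0) := c.c103.congr fun P _ => Chr_symm _ _ _ _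
  have e230 : Bd R (-3) 2 (Chr a 2 3 0) := c.c203.congr fun P _ => Chr_symm _ _ _ _
  refine Bd.congr (Bd.cmul _ (Bd.cmul _ (Bd.add (Bd.sub (Bd.add (Bd.add
    (Bd.cmul _ (Bd.sub (d.d130.mono ?_ ?_) (d.d310.mono ?_ ?_)))
    (Bd.cmul _ (Bd.sub (d.d133.mono ?_ ?_) (d.d313.mono ?_ ?_))))
    (Bd.add (Bd.cmul _ (Bd.add (e130.mm ht.h11.bd ?_ ?_) (e230.mm ht.h21.bd ?_ ?_)))
     (Bd.cmul _ (Bd.add (c.c133.mm ht.h11.bd ?_ ?_) (c.c233.mm ht.h21.bd ?_ ?_)))))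
    (Bd.add (Bd.cmul _ (Bd.add (c.c010.mm ht.h03.bd ?_ ?_) (c.c310.mm ht.h33.bd ?_ ?_)))
     (Bd.cmul _ (Bd.add (c.c013.mm ht.h03.bd ?_ ?_) (c.c313.mm ht.h33.bd ?_ ?_)))))
    (Bd.mm (p := 2) (e := 0) (Bd.add ((Bd.cmul _ g30).mono ?_ ?_) ((Bd.cmul _ g33).mono ?_ ?_))
      dv ?_ ?_))))
    fun P hP => ADform_1b ha hP x y (.inr rfl) <;> norm_num [qq]

lemma HH.fdens (ha : |a| < 1) (hh : HH R h) (x y : ℝ) :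
    Bd R (-1) 0 (fun P => Fdens a h x y P) := by
  have S : Bd R 2 0 (fun P : Pt => Sig a (P 1) (P 2)) := (Cf.Sig (c := 2) (k := 0)).bd
  have i00 := (Ci00 (R := R) (k := 1) ha).bd
  have i03 := (Ci03 (R := R) (k := 1) ha).bd
  have i11 := (Ci11 (R := R) (k := 1) ha).bd
  refine Bd.congr (S.mm (i11.mm (p'' := -3) (e'' := 0) (Bd.add
    (i00.mm (hh.F10 ha x y) (p'' := -3) (e'' := 0) ?_ ?_) (i03.mm (hh.F13 ha x y) ?_ ?_)) ?_ ?_)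
    ?_ ?_) fun P hP => ?_
  rotate_right
  · obtain ⟨z1, z2, z3, z4, z5, z6, z7, z8, z9, z10⟩ := gInv_zeros (R := R) ha hP
    simp only [Fdens, ADformUp, Fin.sum_univ_four, z1, z2, z3, z4, z5, z6, z7, z8, z9, z10]
    ring
  all_goals norm_num

end adform2

section hertz

set_option linter.unusedSectionVars false

variable {R a : ℝ} {P : Pt}

lemma MM.c02 [Fact (4 ≤ R)] {k : ℕ} {p : ℤ} {q : ℕ → ℤ} {f : Pt → ℂ} (h : MM R 0 k p q f) :
    MM R 2 k p q f := by
  induction k generalizing p q f with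
  | zero => exact h
  | succ k ih =>
    obtain ⟨h0, h1, h2, h3⟩ := h
    exact ⟨h0, h1, ih h2, (ih h3).mono le_rfl fun i _ => by simp⟩

/-- A function of `(r, z)` as a function on spacetime. -/
def lft (f : ℝ → ℝ → ℂ) : Pt → ℂ := fun P => f (P 1) (P 2)

lemma lft_facts {f : ℝ → ℝ → ℂ}
    (hf : DifferentiableAt ℝ (fun q : ℝ × ℝ => f q.1 q.2) (P 1, P 2)) :
    DifferentiableAt ℝ (lft f) P ∧ dd 0 (lft f) P = 0 ∧ dd 3 (lft f) P = 0 ∧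
      dd 1 (lft f) P = lft (pdr2 f) P ∧ dd 2 (lft f) P = lft (pdz2 f) P := by
  have h1 : HasFDerivAt (fun Q : Pt => (Q 1, Q 2))
      ((ContinuousLinearMap.proj (R := ℝ) (φ := fun _ : Fin 4 => ℝ) 1).prod
        (ContinuousLinearMap.proj (R := ℝ) (φ := fun _ : Fin 4 => ℝ) 2)) P :=
    ((ContinuousLinearMap.proj (R := ℝ) (φ := fun _ : Fin 4 => ℝ) 1).prod
        (ContinuousLinearMap.proj (R := ℝ) (φ := fun _ : Fin 4 => ℝ) 2)).hasFDerivAt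
  have h2' := HasFDerivAt.comp (g := fun q : ℝ × ℝ => f q.1 q.2) P hf.hasFDerivAt h1
  have h2 : HasFDerivAt (lft f) ((fderiv ℝ (fun q : ℝ × ℝ => f q.1 q.2) (P 1, P 2)).comp
      ((ContinuousLinearMap.proj (R := ℝ) (φ := fun _ : Fin 4 => ℝ) 1).prod
        (ContinuousLinearMap.proj (R := ℝ) (φ := fun _ : Fin 4 => ℝ) 2))) P := h2'
  have e : ∀ i, dd i (lft f) P = fderiv ℝ (fun q : ℝ × ℝ => f q.1 q.2) (P 1, P 2)
      ((Pi.single i 1 : Pt) 1, (Pi.single i 1 : Pt) 2) := fun i => by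
    simp only [dd, h2.fderiv]
    rfl
  have hr : pdr2 f (P 1) (P 2) =
      fderiv ℝ (fun q : ℝ × ℝ => f q.1 q.2) (P 1, P 2) (1, 0) := by
    have h3 : HasDerivAt (fun r : ℝ => (r, P 2)) ((1 : ℝ), (0 : ℝ)) (P 1) :=
      (hasDerivAt_id _).prodMk (hasDerivAt_const _ _)
    exact (HasFDerivAt.comp_hasDerivAt (P 1) hf.hasFDerivAt h3).deriv
  have hz : pdz2 f (P 1) (P 2) =
      fderiv ℝ (fun q : ℝ × ℝ => f q.1 q.2) (P 1, P 2) (0, 1) := by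
    have h3 : HasDerivAt (fun z : ℝ => (P 1, z)) ((0 : ℝ), (1 : ℝ)) (P 2) :=
      (hasDerivAt_const _ _).prodMk (hasDerivAt_id _)
    exact (HasFDerivAt.comp_hasDerivAt (P 2) hf.hasFDerivAt h3).deriv
  refine ⟨h2.differentiableAt, ?_, ?_, ?_, ?_⟩
  · rw [e, show ((Pi.single 0 1 : Pt) 1, (Pi.single 0 1 : Pt) 2) = (0 : ℝ × ℝ) by
      ext <;> simp, map_zero]
  · rw [e, show ((Pi.single 3 1 : Pt) 1, (Pi.single 3 1 : Pt) 2) = (0 : ℝ × ℝ) by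
      ext <;> simp, map_zero]
  · rw [e, lft, hr]; simp
  · rw [e, lft, hz]; simp

lemma isOpen_U2 : IsOpen (U2 a) := by
  have h1 : IsOpen {q : ℝ × ℝ | rplus a < q.1} := isOpen_lt continuous_const continuous_fst
  have h2 : IsOpen {q : ℝ × ℝ | -1 < q.2} := isOpen_lt continuous_const continuous_snd
  have h3 : IsOpen {q : ℝ × ℝ | q.2 < 1} := isOpen_lt continuous_snd continuous_const
  exact h1.inter (h2.inter h3)

/-- Smooth functions on the open domain. -/
def Sm (a : ℝ) (f : ℝ → ℝ → ℂ) : Prop :=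
  ContDiffOn ℝ (⊤ : ℕ∞) (fun q : ℝ × ℝ => f q.1 q.2) (U2 a)

lemma Sm.at {f : ℝ → ℝ → ℂ} (h : Sm a f) {q : ℝ × ℝ} (hq : q ∈ U2 a) :
    ContDiffAt ℝ (⊤ : ℕ∞) (fun q : ℝ × ℝ => f q.1 q.2) q :=
  ContDiffOn.contDiffAt h (isOpen_U2.mem_nhds hq)

lemma Sm.diff {f : ℝ → ℝ → ℂ} (h : Sm a f) {q : ℝ × ℝ} (hq : q ∈ U2 a) :
    DifferentiableAt ℝ (fun q : ℝ × ℝ => f q.1 q.2) q :=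
  (h.at hq).differentiableAt (by simp)

lemma Sm.pdr_eq {f : ℝ → ℝ → ℂ} (h : Sm a f) {q : ℝ × ℝ} (hq : q ∈ U2 a) :
    pdr2 f q.1 q.2 = fderiv ℝ (fun q : ℝ × ℝ => f q.1 q.2) q (1, 0) := by
  have h3 : HasDerivAt (fun r : ℝ => (r, q.2)) ((1 : ℝ), (0 : ℝ)) q.1 :=
    (hasDerivAt_id _).prodMk (hasDerivAt_const _ _)
  exact (HasFDerivAt.comp_hasDerivAt q.1 (h.diff hq).hasFDerivAt h3).deriv

lemma Sm.pdz_eq {f : ℝ → ℝ → ℂ} (h : Sm a f) {q : ℝ × ℝ} (hq : q ∈ U2 a) :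
    pdz2 f q.1 q.2 = fderiv ℝ (fun q : ℝ × ℝ => f q.1 q.2) q (0, 1) := by
  have h3 : HasDerivAt (fun z : ℝ => (q.1, z)) ((0 : ℝ), (1 : ℝ)) q.2 :=
    (hasDerivAt_const _ _).prodMk (hasDerivAt_id _)
  exact (HasFDerivAt.comp_hasDerivAt q.2 (h.diff hq).hasFDerivAt h3).deriv

lemma Sm.fd {f : ℝ → ℝ → ℂ} (h : Sm a f) :
    ContDiffOn ℝ (⊤ : ℕ∞) (fderiv ℝ (fun q : ℝ × ℝ => f q.1 q.2)) (U2 a) :=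
  ContDiffOn.fderiv_of_isOpen h isOpen_U2 (by simp)

lemma Sm.pdr {f : ℝ → ℝ → ℂ} (h : Sm a f) : Sm a (pdr2 f) :=
  (h.fd.clm_apply (contDiffOn_const (c := ((1 : ℝ), (0 : ℝ))))).congr fun _ hq => h.pdr_eq hq

lemma Sm.pdz {f : ℝ → ℝ → ℂ} (h : Sm a f) : Sm a (pdz2 f) :=
  (h.fd.clm_apply (contDiffOn_const (c := ((0 : ℝ), (1 : ℝ))))).congr fun _ hq => h.pdz_eq hq

lemma Sm.congr {f f' : ℝ → ℝ → ℂ} (h : Sm a f) (e : ∀ q ∈ U2 a, f' q.1 q.2 = f q.1 q.2) :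
    Sm a f' := ContDiffOn.congr h e

lemma pdr_congr {f f' : ℝ → ℝ → ℂ} (h : Sm a f) (e : ∀ q ∈ U2 a, f' q.1 q.2 = f q.1 q.2) :
    ∀ q ∈ U2 a, pdr2 f' q.1 q.2 = pdr2 f q.1 q.2 := fun q hq => by
  rw [h.pdr_eq hq, (h.congr e).pdr_eq hq, Filter.EventuallyEq.fderiv_eq]
  filter_upwards [isOpen_U2.mem_nhds hq] with x hx using e x hx

lemma Sm.comm {f : ℝ → ℝ → ℂ} (h : Sm a f) :
    ∀ q ∈ U2 a, pdz2 (pdr2 f) q.1 q.2 = pdr2 (pdz2 f) q.1 q.2 := fun q hq => by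
  rw [h.pdr.pdz_eq hq, h.pdz.pdr_eq hq]
  have e1 : (fun q : ℝ × ℝ => pdr2 f q.1 q.2) =ᶠ[nhds q]
      fun q => fderiv ℝ (fun q : ℝ × ℝ => f q.1 q.2) q (1, 0) := by
    filter_upwards [isOpen_U2.mem_nhds hq] with x hx using h.pdr_eq hx
  have e2 : (fun q : ℝ × ℝ => pdz2 f q.1 q.2) =ᶠ[nhds q]
      fun q => fderiv ℝ (fun q : ℝ × ℝ => f q.1 q.2) q (0, 1) := by
    filter_upwards [isOpen_U2.mem_nhds hq] with x hx using h.pdz_eq hx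
  have hd : DifferentiableAt ℝ (fderiv ℝ (fun q : ℝ × ℝ => f q.1 q.2)) q :=
    (h.fd.contDiffAt (isOpen_U2.mem_nhds hq)).differentiableAt (by simp)
  rw [e1.fderiv_eq, e2.fderiv_eq, fderiv_clm_apply hd (differentiableAt_const _),
    fderiv_clm_apply hd (differentiableAt_const _)]
  have hs : IsSymmSndFDerivAt ℝ (fun q : ℝ × ℝ => f q.1 q.2) q :=
    (h.at hq).isSymmSndFDerivAt (by simp; exact WithTop.coe_le_coe.2 (le_top : (2 : ℕ∞) ≤ ⊤))
  have := hs (0, 1) (1, 0)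
  simpa using this

lemma Sm.itr {f : ℝ → ℝ → ℂ} (h : Sm a f) (i : ℕ) : Sm a (pdr2^[i] f) := by
  induction i with
  | zero => exact h
  | succ i ih => rw [Function.iterate_succ_apply']; exact ih.pdr

lemma Sm.itz {f : ℝ → ℝ → ℂ} (h : Sm a f) (i : ℕ) : Sm a (pdz2^[i] f) := by
  induction i with
  | zero => exact h
  | succ i ih => rw [Function.iterate_succ_apply']; exact ih.pdz

lemma Sm.comm_it {f : ℝ → ℝ → ℂ} (h : Sm a f) (i : ℕ) :
    ∀ q ∈ U2 a, pdz2 (pdr2^[i] f) q.1 q.2 = (pdr2^[i] (pdz2 f)) q.1 q.2 := by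
  induction i with
  | zero => intro q _; rfl
  | succ i ih =>
    intro q hq
    rw [Function.iterate_succ_apply', Function.iterate_succ_apply', (h.itr i).comm q hq]
    exact pdr_congr (h.pdz.itr i) ih q hq

lemma chi_class [Fact (4 ≤ R)] (hR : rplus a ≤ R) {χ : ℝ → ℝ → ℂ} (h : Sm a χ) {C : ℝ}
    (hC : 0 < C) {n : ℤ} (hfall : ∀ i j : ℕ, i + j ≤ 3 →
      ∀ r z : ℝ, R < r → z ∈ Set.Icc (-1 : ℝ) 1 →
        ‖(pdr2^[i] (pdz2^[j] χ)) r z‖ ≤ C * r ^ (n - 1 - (i : ℤ))) (k : ℕ) :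
    ∀ i j : ℕ, i + j + k ≤ 3 →
      Cf R 0 k (n - 1 - i) 0 (lft (pdr2^[i] (pdz2^[j] χ))) := by
  have hU : ∀ P ∈ Om R, (P 1, P 2) ∈ U2 a := fun P hP =>
    ⟨lt_of_le_of_lt hR hP.1, hP.2.1, hP.2.2⟩
  have hb : ∀ i j : ℕ, i + j ≤ 3 → Bd R (n - 1 - i) 0 (lft (pdr2^[i] (pdz2^[j] χ))) :=
    fun i j hij => ⟨C, hC.le, fun P hP => by
      simpa [lft] using hfall i j hij (P 1) (P 2) hP.1 ⟨hP.2.1.le, hP.2.2.le⟩⟩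
  induction k with
  | zero => intro i j hij; exact hb i j hij
  | succ k ih =>
    intro i j hij
    have hs := (h.itz j).itr i
    have F := fun P hP => lft_facts (hs.diff (hU P hP))
    refine ⟨hb i j (by omega), fun P hP => ⟨(F P hP).1, (F P hP).2.1, (F P hP).2.2.1⟩, ?_, ?_⟩
    · refine ((ih (i + 1) j (by omega)).mono (by push_cast; linarith) (by simp)).congr
        fun P hP => ?_
      rw [(F P hP).2.2.2.1, Function.iterate_succ_apply']
    · refine ((ih i (j + 1) (by omega)).mono le_rfl (by simp)).congr fun P hP => ?_
      rw [(F P hP).2.2.2.2, Function.iterate_succ_apply']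
      exact (h.itz j).comm_it i _ (hU P hP)

lemma phi_class [Fact (4 ≤ R)] (k : ℕ) {f : ℝ → ℂ}
    (hf : ContDiffOn ℝ (⊤ : ℕ∞) f (Set.Icc (-1 : ℝ) 1)) :
    Cf R 0 k 0 0 (fun P : Pt => f (P 2)) := by
  have hb : ∀ f : ℝ → ℂ, ContDiffOn ℝ (⊤ : ℕ∞) f (Set.Icc (-1 : ℝ) 1) →
      Bd R 0 0 (fun P : Pt => f (P 2)) := fun f hf => by
    obtain ⟨C, hC⟩ := isCompact_Icc.exists_bound_of_continuousOn hf.continuousOn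
    refine ⟨max C 0, le_max_right _ _, fun P hP => ?_⟩
    have := hC (P 2) ⟨hP.2.1.le, hP.2.2.le⟩
    simpa using Or.inl this
  induction k generalizing f with
  | zero => exact hb f hf
  | succ k ih =>
    have hu := uniqueDiffOn_Icc (show (-1 : ℝ) < 1 by norm_num)
    have hf' := ((contDiffOn_infty_iff_derivWithin hu).1 hf)
    have F : ∀ P ∈ Om R, DifferentiableAt ℝ f (P 2) := fun P hP =>
      (hf.contDiffAt (Icc_mem_nhds hP.2.1 hP.2.2)).differentiableAt (by simp)
    have G : ∀ P ∈ Om R, _ := fun P hP => lft_facts (P := P) (f := fun _ z => f z)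
      (DifferentiableAt.comp (P 1, P 2) (F P hP) differentiableAt_snd)
    refine ⟨hb f hf, fun P hP => ⟨(G P hP).1, (G P hP).2.1, (G P hP).2.2.1⟩, ?_, ?_⟩
    · refine MM.zero.congr fun P hP => ?_
      refine (G P hP).2.2.2.1.trans ?_
      simp [lft, pdr2]
    · refine ((ih hf'.2).mono le_rfl (by simp)).congr fun P hP => ?_
      refine (G P hP).2.2.2.2.trans ?_
      simp only [lft, pdz2]
      exact (derivWithin_of_mem_nhds (Icc_mem_nhds hP.2.1 hP.2.2)).symm

lemma rpow_class [Fact (4 ≤ R)] (k m : ℕ) :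
    Cf R 0 k (-(m : ℤ)) 0 (fun P : Pt => ((P 1 : ℝ) : ℂ) ^ (-(m : ℤ))) := by
  have h : Cf R 0 k (-1) (-0) (fun P : Pt => (((P 1 : ℝ) : ℂ))⁻¹) :=
    MM.iv (C := 1) (MM.ofReal Cf.r) one_pos fun P hP => by
      have := r_gt hP
      simp [abs_of_pos (show 0 < P 1 by linarith)]
  refine ((h.pw m).wk (by simp) (by simp)).congr fun P _ => ?_
  simp [zpow_neg]

end hertz

section teukolsky

set_option linter.unusedSectionVars false

variable {R a : ℝ} {P : Pt} [Fact (4 ≤ R)]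

/-- The angular potential. -/
def VV0 (s : ℤ) (P : Pt) : ℂ := (s : ℂ) * ((s : ℂ) + 1) * (P 2 : ℂ) ^ 2 - (s : ℂ)

/-- Gain of two powers of `w` at the axis. -/
lemma Bd.gain {s : ℤ} (hs : s = 2 ∨ s = -2) {p : ℤ} {f e : Pt → ℂ} (hf : Bd R p 0 f)
    (he : Bd R p 0 e) (h : ∀ P ∈ Om R, VV0 s P * f P = (1 - (P 2 : ℂ) ^ 2) * e P) :
    Bd R p 2 f := by
  obtain ⟨C, hC, hf⟩ := hf
  obtain ⟨D, hD, he⟩ := he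
  refine ⟨2 * C + D, by positivity, fun P hP => ?_⟩
  have h1 := hf P hP
  have h2 := he P hP
  have h3 := congrArg norm (h P hP)
  have hr : 0 < P 1 ^ p := by have := r_gt hP; positivity
  have hw : (ww P) ^ (2 : ℤ) = 1 - P 2 ^ 2 := ww_sq hP
  have hw0 := one_sub_sq_pos hP
  rw [hw]
  simp only [zpow_zero, mul_one] at h1 h2
  by_cases hz : 1 / 2 ≤ P 2 ^ 2
  · have hV : 1 ≤ ‖VV0 s P‖ := by
      have e1 : VV0 s P = ((s * (s + 1) * P 2 ^ 2 - s : ℝ) : ℂ) := by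
        simp [VV0]
      rw [e1, Complex.norm_real, Real.norm_eq_abs]
      refine le_trans ?_ (le_abs_self _)
      rcases hs with rfl | rfl <;> push_cast <;> nlinarith
    have e2 : ‖(1 - (P 2 : ℂ) ^ 2)‖ = 1 - P 2 ^ 2 := by
      rw [show (1 - (P 2 : ℂ) ^ 2) = ((1 - P 2 ^ 2 : ℝ) : ℂ) by push_cast; ring,
        Complex.norm_real, Real.norm_eq_abs, abs_of_pos hw0]
    rw [norm_mul, norm_mul, e2] at h3
    have : ‖f P‖ ≤ (1 - P 2 ^ 2) * (D * P 1 ^ p) := by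
      calc ‖f P‖ ≤ ‖VV0 s P‖ * ‖f P‖ := by nlinarith [norm_nonneg (f P)]
        _ = _ := h3
        _ ≤ _ := mul_le_mul_of_nonneg_left h2 hw0.le
    have h5 : 0 ≤ C * (P 1 ^ p * (1 - P 2 ^ 2)) := by positivity
    nlinarith
  · have h4 : 1 / 2 ≤ 1 - P 2 ^ 2 := by linarith
    have h5 : 0 ≤ D * (P 1 ^ p * (1 - P 2 ^ 2)) := by positivity
    have h6 : 0 ≤ C * P 1 ^ p := by positivity
    nlinarith

/-- The regular part of the Teukolsky operator. -/
def EE (a : ℝ) (s : ℤ) (Ψ : Pt → ℂ) (P : Pt) : ℂ :=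
  ((Del a (P 1) : ℝ) : ℂ) * dd 1 (dd 1 Ψ) P
    + ((s : ℂ) + 1) * (((2 * P 1 - 2 : ℝ) : ℂ) * dd 1 Ψ P)
    + (((1 - P 2 ^ 2 : ℝ) : ℂ) * dd 2 (dd 2 Ψ) P - 2 * (((P 2 : ℝ) : ℂ) * dd 2 Ψ P))

lemma EE_class {s : ℤ} {n : ℤ} {Ψ : Pt → ℂ} (h : Cf R 0 3 n 0 Ψ) : Cf R 0 1 n 0 (EE a s Ψ) := by
  have h1 : Cf R 0 2 (n - 1) 0 (dd 1 Ψ) := h.2.2.1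
  have h2 : Cf R 0 2 n 0 (dd 2 Ψ) := h.2.2.2.mono le_rfl (by simp)
  have h11 : Cf R 0 1 (n - 1 - 1) 0 (dd 1 (dd 1 Ψ)) := h1.2.2.1
  have h22 : Cf R 0 1 n 0 (dd 2 (dd 2 Ψ)) := h2.2.2.2.mono le_rfl (by simp)
  have c1 : Cf R 0 1 2 0 (fun P : Pt => ((Del a (P 1) : ℝ) : ℂ)) := MM.ofReal Cf.Del
  have c2 : Cf R 0 1 1 0 (fun P : Pt => ((2 * P 1 - 2 : ℝ) : ℂ)) :=
    MM.ofReal (MM.sub (Cf.r.cmul 2) ((MM.const 2).wk (by norm_num) le_rfl))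
  have c3 : Cf R 0 1 0 0 (fun P : Pt => ((1 - P 2 ^ 2 : ℝ) : ℂ)) :=
    MM.ofReal (MM.sub (MM.const 1) ((Cf.z.pw 2).wk (by norm_num) (by norm_num)))
  have c4 : Cf R 0 1 0 0 (fun P : Pt => ((P 2 : ℝ) : ℂ)) := MM.ofReal Cf.z
  exact MM.add (MM.add ((c1.cm h11).wk (by linarith) (by norm_num))
    (((c2.cm h1.down).wk (by linarith) (by norm_num)).cmul _))
    (MM.sub ((c3.cm h22).wk (by linarith) (by norm_num))
      (((c4.cm h2.down).wk (by linarith) (by norm_num)).cmul _))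

lemma pdr2_lft_dd {ψ : ℝ → ℝ → ℂ} (hψ : Sm a ψ) (hR : rplus a ≤ R) (hP : P ∈ Om R) :
    dd 1 (lft ψ) P = pdr2 ψ (P 1) (P 2) ∧ dd 2 (lft ψ) P = pdz2 ψ (P 1) (P 2) ∧
    dd 1 (dd 1 (lft ψ)) P = pdr2 (pdr2 ψ) (P 1) (P 2) ∧
    dd 2 (dd 2 (lft ψ)) P = pdz2 (pdz2 ψ) (P 1) (P 2) := by
  have hU : ∀ P ∈ Om R, (P 1, P 2) ∈ U2 a := fun P hP =>
    ⟨lt_of_le_of_lt hR hP.1, hP.2.1, hP.2.2⟩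
  have F := fun P hP => lft_facts (hψ.diff (hU P hP))
  refine ⟨(F P hP).2.2.2.1, (F P hP).2.2.2.2, ?_, ?_⟩
  · rw [dd_congr (fun Q hQ => (F Q hQ).2.2.2.1) hP]
    exact (lft_facts (hψ.pdr.diff (hU P hP))).2.2.2.1
  · rw [dd_congr (fun Q hQ => (F Q hQ).2.2.2.2) hP]
    exact (lft_facts (hψ.pdz.diff (hU P hP))).2.2.2.2

lemma teuk_rel (ha : |a| < 1) {s : ℤ} {ψ : ℝ → ℝ → ℂ} (hψ : Sm a ψ) (hR : rplus a ≤ R)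
    (hteuk : ∀ q ∈ U2 a, TeukSAS a s ψ q.1 q.2 = 0) (hP : P ∈ Om R) :
    VV0 s P * lft ψ P = (1 - (P 2 : ℂ) ^ 2) * EE a s (lft ψ) P := by
  have hU : (P 1, P 2) ∈ U2 a := ⟨lt_of_le_of_lt hR hP.1, hP.2.1, hP.2.2⟩
  have ht := hteuk _ hU
  obtain ⟨e1, e2, e3, e4⟩ := pdr2_lft_dd hψ hR hP
  have hD : ((Del a (P 1) : ℝ) : ℂ) ≠ 0 := by exact_mod_cast (Del_pos ha hP).ne'
  have hw : (1 - (P 2 : ℂ) ^ 2) ≠ 0 := by exact_mod_cast (one_sub_sq_pos hP).ne'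
  have d1 : HasDerivAt (fun r => pdr2 ψ r (P 2)) (pdr2 (pdr2 ψ) (P 1) (P 2)) (P 1) := by
    have h3 : HasDerivAt (fun r : ℝ => (r, P 2)) ((1 : ℝ), (0 : ℝ)) (P 1) :=
      (hasDerivAt_id _).prodMk (hasDerivAt_const _ _)
    exact (HasFDerivAt.comp_hasDerivAt (P 1) (hψ.pdr.diff hU).hasFDerivAt h3
      ).differentiableAt.hasDerivAt
  have d2 : HasDerivAt (fun z => pdz2 ψ (P 1) z) (pdz2 (pdz2 ψ) (P 1) (P 2)) (P 2) := by
    have h3 : HasDerivAt (fun z : ℝ => (P 1, z)) ((0 : ℝ), (1 : ℝ)) (P 2) :=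
      (hasDerivAt_const _ _).prodMk (hasDerivAt_id _)
    exact (HasFDerivAt.comp_hasDerivAt (P 2) (hψ.pdz.diff hU).hasFDerivAt h3
      ).differentiableAt.hasDerivAt
  have dD0 : HasDerivAt (fun r : ℝ => Del a r) (2 * P 1 - 2) (P 1) := by
    have := ((hasDerivAt_id (P 1)).mul ((hasDerivAt_id (P 1)).sub_const 2)).add_const (a ^ 2)
    refine this.congr_deriv ?_
    simp; ring
  have dD : HasDerivAt (fun r : ℝ => ((Del a r : ℝ) : ℂ)) ((2 * P 1 - 2 : ℝ) : ℂ) (P 1) :=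
    dD0.ofReal_comp
  have dDs : HasDerivAt (fun r : ℝ => ((Del a r : ℝ) : ℂ) ^ (s + 1))
      ((((s + 1 : ℤ) : ℂ) * ((Del a (P 1) : ℝ) : ℂ) ^ (s + 1 - 1)) * ((2 * P 1 - 2 : ℝ) : ℂ))
      (P 1) :=
    HasDerivAt.comp (P 1) (hasDerivAt_zpow (s + 1) _ (.inl hD)) dD
  have dw0 : HasDerivAt (fun z : ℝ => 1 - z ^ 2) (-(2 * P 2)) (P 2) := by
    have := ((hasDerivAt_id (P 2)).pow 2).const_sub 1
    refine this.congr_deriv ?_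
    simp
  have dw := dw0.ofReal_comp
  have t1 := (dDs.mul d1).deriv
  have t2 := (dw.mul d2).deriv
  have t1' : deriv (fun r' => (Del a r' : ℂ) ^ (s + 1) * deriv (fun r'' => ψ r'' (P 2)) r') (P 1)
    = _ := t1
  have t2' : deriv (fun z' => ((1 - z' ^ 2 : ℝ) : ℂ) * deriv (fun z'' => ψ (P 1) z'') z') (P 2)
    = _ := t2
  simp only [TeukSAS, t1', t2'] at ht
  simp only [EE, e1, e2, e3, e4, VV0, lft]
  rw [zpow_neg, zpow_add₀ hD, zpow_one, add_sub_cancel_right] at ht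
  have hDs : ((Del a (P 1) : ℝ) : ℂ) ^ s ≠ 0 := zpow_ne_zero _ hD
  field_simp at ht
  push_cast at ht ⊢
  linear_combination -ht
end teukolsky

section conclusion

set_option linter.unusedSectionVars false

variable {R a : ℝ} {P : Pt} [Fact (4 ≤ R)]

lemma psi_class (hR : rplus a ≤ R) {ψ : ℝ → ℝ → ℂ} {Φ₀ : ℝ → ℂ} (hψ : Sm a ψ)
    (hΦ₀ : ContDiffOn ℝ (⊤ : ℕ∞) Φ₀ (Set.Icc (-1 : ℝ) 1)) (m : ℕ) {C : ℝ} (hC : 0 < C)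
    (hfall : ∀ i j : ℕ, i + j ≤ 3 →
      ∀ r z : ℝ, R < r → z ∈ Set.Icc (-1 : ℝ) 1 →
        ‖(pdr2^[i] (pdz2^[j] (fun r' z' => ψ r' z' - Φ₀ z' * (r' : ℂ) ^ (-(m : ℤ))))) r z‖
          ≤ C * r ^ (-(m : ℤ) - 1 - (i : ℤ))) :
    Cf R 0 3 (-(m : ℤ)) 0 (lft ψ) := by
  have hr1 : 1 ≤ rplus a := by
    unfold rplus
    linarith [Real.sqrt_nonneg (1 - a ^ 2)]
  have h1 : ContDiffOn ℝ (⊤ : ℕ∞) (fun q : ℝ × ℝ => Φ₀ q.2) (U2 a) :=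
    hΦ₀.comp contDiff_snd.contDiffOn fun q hq => ⟨hq.2.1.le, hq.2.2.le⟩
  have h2 : ContDiffOn ℝ (⊤ : ℕ∞) (fun q : ℝ × ℝ => (q.1 : ℂ) ^ (-(m : ℤ))) (U2 a) := by
    have e : (fun q : ℝ × ℝ => (q.1 : ℂ) ^ (-(m : ℤ))) =
        fun q : ℝ × ℝ => ((q.1 : ℂ) ^ m)⁻¹ := by
      funext q; simp [zpow_neg]
    rw [e]
    refine ContDiffOn.inv (ContDiff.contDiffOn ?_) fun q hq => ?_
    · exact (Complex.ofRealCLM.contDiff.comp contDiff_fst).pow m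
    · have : 0 < q.1 := by linarith [hq.1]
      exact pow_ne_zero _ (by exact_mod_cast this.ne')
  have hχ : Sm a (fun r' z' => ψ r' z' - Φ₀ z' * (r' : ℂ) ^ (-(m : ℤ))) :=
    ContDiffOn.sub hψ (h1.mul h2)
  have c1 : Cf R 0 3 (-(m : ℤ) - 1 - (0 : ℕ)) 0 _ := chi_class hR hχ hC hfall 3 0 0 le_rfl
  have c2 := (phi_class (R := R) 3 hΦ₀).cm (rpow_class 3 m)
  refine (MM.add (c1.wk (p' := -(m : ℤ)) (by simp) le_rfl)
    (c2.wk (p' := -(m : ℤ)) (by simp) (by norm_num))).congr fun P _ => ?_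
  simp [lft]

lemma psi_MM (ha : |a| < 1) (hR : rplus a ≤ R) {s : ℤ} (hs : s = 2 ∨ s = -2) {n : ℤ}
    {ψ : ℝ → ℝ → ℂ} (hψ : Sm a ψ) (hteuk : ∀ q ∈ U2 a, TeukSAS a s ψ q.1 q.2 = 0)
    (h : Cf R 0 3 n 0 (lft ψ)) : MM R 2 3 n qpsi (lft ψ) := by
  have hE : Cf R 0 1 n 0 (EE a s (lft ψ)) := EE_class h
  have rel : ∀ P ∈ Om R, VV0 s P * lft ψ P = (1 - (P 2 : ℂ) ^ 2) * EE a s (lft ψ) P :=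
    fun P hP => teuk_rel ha hψ hR hteuk hP
  have b0 : Bd R n 2 (lft ψ) := Bd.gain hs h.bd hE.bd rel
  have hz : ∀ c d : ℂ, ∀ P : Pt, DifferentiableAt ℝ (fun P : Pt => c * (P 2 : ℂ) ^ 2 + d) P ∧
      dd 1 (fun P : Pt => c * (P 2 : ℂ) ^ 2 + d) P = 0 := fun c d P => by
    have hd : DifferentiableAt ℝ (fun q : ℝ × ℝ => c * (q.2 : ℂ) ^ 2 + d) (P 1, P 2) := by
      have : DifferentiableAt ℝ (fun q : ℝ × ℝ => (q.2 : ℂ)) (P 1, P 2) :=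
        (Complex.ofRealCLM.differentiableAt).comp _ differentiableAt_snd
      exact ((this.pow 2).const_mul c).add_const d
    have F := lft_facts (P := P) (f := fun _ z => c * (z : ℂ) ^ 2 + d) hd
    refine ⟨F.1, F.2.2.2.1.trans ?_⟩
    simp [lft, pdr2]
  have rel1 : ∀ P ∈ Om R, VV0 s P * dd 1 (lft ψ) P =
      (1 - (P 2 : ℂ) ^ 2) * dd 1 (EE a s (lft ψ)) P := fun P hP => by
    have z1 := hz ((s : ℂ) * ((s : ℂ) + 1)) (-(s : ℂ)) P
    have z2 := hz (-1) 1 P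
    have rel' : ∀ P ∈ Om R,
        ((s : ℂ) * ((s : ℂ) + 1) * (P 2 : ℂ) ^ 2 + -(s : ℂ)) * lft ψ P =
        (-1 * (P 2 : ℂ) ^ 2 + 1) * EE a s (lft ψ) P := fun P hP => by
      have := rel P hP
      rw [VV0] at this
      linear_combination this
    have := dd_congr rel' hP 1
    rw [dd_mul z1.1 (h.2.1 P hP).1, dd_mul z2.1 (hE.2.1 P hP).1, z1.2, z2.2] at this
    rw [VV0]
    linear_combination this
  have b1 : Bd R (n - 1) 2 (dd 1 (lft ψ)) := Bd.gain hs h.2.2.1.bd hE.2.2.1.bd rel1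
  obtain ⟨-, d0, ⟨-, d1, h11, h21⟩, h2⟩ := h
  refine ⟨b0, d0, ⟨b1, d1, h11.c02.mono le_rfl ?_, h21.c02.mono le_rfl ?_⟩,
    h2.c02.mono le_rfl ?_⟩
  · intro i _; simp [qpsi]
  · intro i _; simp only [qpsi]; split_ifs <;> norm_num
  · intro i _; simp only [qpsi]; split_ifs <;> norm_num

lemma gInv_axis (p : Pt) (hz : p 2 ^ 2 = 1) : gInv a p = 0 := by
  have h0 : (g a p).det = 0 := by
    refine Matrix.det_eq_zero_of_row_eq_zero 2 fun j => ?_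
    fin_cases j <;> simp [g, gFam, hz]
  unfold gInv
  exact Matrix.nonsing_inv_apply_not_isUnit _ (by simp [h0])

lemma Fdens_axis (h : Pt → Matrix (Fin 4) (Fin 4) ℝ) (x y : ℝ) (p : Pt) (hz : p 2 ^ 2 = 1) :
    Fdens a h x y p = 0 := by
  simp [Fdens, ADformUp, gInv_axis p hz]

lemma final (ha : |a| < 1) (hR : rplus a ≤ R) {h : Pt → Matrix (Fin 4) (Fin 4) ℝ} (hh : HH R h)
    (x y : ℝ) :
    (∃ C R : ℝ, 0 < C ∧ rplus a < R ∧ ∀ t φv r z : ℝ, R < r → -1 ≤ z → z ≤ 1 →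
        |Fdens a h x y ![t, r, z, φv]| ≤ C / r) ∧
      (∀ t : ℝ, Tendsto (fun r => ADcharge a h x y t r) atTop (nhds 0)) := by
  obtain ⟨C, hC, hb⟩ := hh.fdens ha x y
  have R4 : 4 ≤ R := Fact.out
  have key : ∀ t φv r z : ℝ, R + 1 < r → -1 ≤ z → z ≤ 1 →
      |Fdens a h x y ![t, r, z, φv]| ≤ (C + 1) / r := by
    intro t φv r z hr h1 h2
    have hr0 : 0 < r := by linarith
    rcases eq_or_lt_of_le h1 with e | h1
    · rw [Fdens_axis _ _ _ _ (by simp [← e]), abs_zero]; positivity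
    rcases eq_or_lt_of_le h2 with e | h2
    · rw [Fdens_axis _ _ _ _ (by simp [e]), abs_zero]; positivity
    have := hb ![t, r, z, φv] ⟨by simpa using by linarith, by simpa using h1, by simpa using h2⟩
    simp only [Real.norm_eq_abs, zpow_zero, mul_one] at this
    refine this.trans ?_
    simp only [Matrix.cons_val_one, Matrix.cons_val_zero, zpow_neg, zpow_one, div_eq_mul_inv]
    gcongr
    linarith
  refine ⟨⟨C + 1, R + 1, by linarith, by linarith, key⟩, fun t => ?_⟩
  have hlim : Tendsto (fun r : ℝ => (C + 1) / r * |1 - (-1 : ℝ)| * |2 * Real.pi - 0|)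
      atTop (nhds 0) := by
    have : Tendsto (fun r : ℝ => (C + 1) / r) atTop (nhds 0) :=
      tendsto_const_nhds.div_atTop tendsto_id
    simpa using (this.mul_const |1 - (-1 : ℝ)|).mul_const |2 * Real.pi - 0|
  refine squeeze_zero_norm' ?_ hlim
  filter_upwards [eventually_gt_atTop (R + 1)] with r hr
  refine intervalIntegral.norm_integral_le_of_norm_le_const fun φ _ => ?_
  refine intervalIntegral.norm_integral_le_of_norm_le_const fun z hz => ?_
  rw [Set.uIoc_of_le (by norm_num)] at hz
  exact key t φ r z hr hz.1.le hz.2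

end conclusion

/-- **Large-radius fall-off of the Abbott–Deser charge density.**  For an infinity-regular
stationary axisymmetric solution `ψ` of `𝒯_s ψ = 0`, the charge density
`ℱ[k] := Σ F^{rt}[h^{CCK}[s,ψ],k]` is `O(r^{−1})` as `r → ∞`, uniformly in `z`;
consequently `Q[h^{CCK}[s,ψ],k,S_{t,r}] → 0` as `r → ∞`. -/
theorem AD_density_large_radius (a : ℝ) (ha : |a| < 1) (s : ℤ) (hs : s = 2 ∨ s = -2)
    (ψ : ℝ → ℝ → ℂ) (Φ₀ : ℝ → ℂ)
    (hψ : ContDiffOn ℝ (⊤ : ℕ∞) (fun q : ℝ × ℝ => ψ q.1 q.2) (U2cl a))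
    (hteuk : ∀ q ∈ U2 a, TeukSAS a s ψ q.1 q.2 = 0)
    (hΦ₀ : ContDiffOn ℝ (⊤ : ℕ∞) Φ₀ (Set.Icc (-1 : ℝ) 1))
    (n : ℤ) (hn : n = if s = -2 then -1 else -5)
    (hfall : ∃ C R : ℝ, 0 < C ∧ rplus a < R ∧ ∀ i j : ℕ, i + j ≤ 3 →
      ∀ r z : ℝ, R < r → z ∈ Set.Icc (-1 : ℝ) 1 →
        ‖(pdr2^[i] (pdz2^[j] (fun r' z' => ψ r' z' - Φ₀ z' * (r' : ℂ) ^ n))) r z‖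
          ≤ C * r ^ (n - 1 - (i : ℤ))) :
    ∀ x y : ℝ,
      (∃ C R : ℝ, 0 < C ∧ rplus a < R ∧ ∀ t φv r z : ℝ, R < r → -1 ≤ z → z ≤ 1 →
        |Fdens a (hCCK a s (fun p => ψ (p 1) (p 2))) x y ![t, r, z, φv]| ≤ C / r) ∧
      (∀ t : ℝ, Tendsto (fun r => ADcharge a (hCCK a s (fun p => ψ (p 1) (p 2))) x y t r)
        atTop (nhds 0)) := by
  obtain ⟨C, R₀, hC, hR₀, hfall⟩ := hfall
  have hS : Sm a ψ := ContDiffOn.mono hψ fun q hq => ⟨hq.1, hq.2.1.le, hq.2.2.le⟩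
  haveI : Fact (4 ≤ max R₀ 4) := ⟨le_max_right _ _⟩
  have hR : rplus a ≤ max R₀ 4 := hR₀.le.trans (le_max_left _ _)
  have hf := fun i j hij r z (hr : max R₀ 4 < r) hz =>
    hfall i j hij r z (lt_of_le_of_lt (le_max_left _ _) hr) hz
  intro x y
  rcases hs with rfl | rfl
  · obtain rfl : n = -((5 : ℕ) : ℤ) := by simpa using hn
    exact final ha hR (HH_plus ha (psi_MM ha hR (.inl rfl) hS hteuk
      (psi_class hR hS hΦ₀ 5 hC hf))) x y
  · obtain rfl : n = -((1 : ℕ) : ℤ) := by simpa using hn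
    exact final ha hR (HH_minus ha (psi_MM ha hR (.inr rfl) hS hteuk
      (psi_class hR hS hΦ₀ 1 hC hf))) x y

end Kerr
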